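/- Let N ≥ 2 and let D be a nonempty convex set of Borel probability measures on [0,1]^N such that Δ_i > 0 for at least one i ∈ [N]. Let ℓ_1, ℓ_2, … be a semi-adversarial loss sequence constrained by D, and let (w_t) be the FTRL-CARL weights (with c = 2), where w_t may only depend on ℓ_1, …, ℓ_{t−1}. Then for every T > 8·(log N₀)/Δ₀², the expected worst-expert regret satisfies E[ max_{i∈[N]} ( Σ_{t=1}^T ⟨ℓ_t, w_t⟩ − Σ_{t=1}^T ℓ_t(i) ) ] ≤ √(2·T·log N₀) + 25·(log N)/Δ₀. -/

import Mathlib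

open MeasureTheory ProbabilityTheory

/-- The error function `erf(z) = (2/√π)∫_0^z e^{-u²} du`. -/
noncomputable def erf (z : ℝ) : ℝ :=
  2 / Real.sqrt Real.pi * ∫ u in (0 : ℝ)..z, Real.exp (-u ^ 2)

/-- `h_B(x) = x·√(2·log(1/x)) − √(π/2)·erf(√(log(1/x))) + x·(N−1)·√(π/2)` for `x ∈ (0,1]`,
with `h_B(0) = −√(π/2)`. -/
noncomputable def hB (N : ℕ) (x : ℝ) : ℝ :=
  if x = 0 then -Real.sqrt (Real.pi / 2)
  else x * Real.sqrt (2 * Real.log (1 / x))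
    - Real.sqrt (Real.pi / 2) * erf (Real.sqrt (Real.log (1 / x)))
    + x * ((N : ℝ) - 1) * Real.sqrt (Real.pi / 2)

noncomputable def HB {N : ℕ} (w : Fin N → ℝ) : ℝ := ∑ i, hB N (w i)

/-- FTRL-CARL with parameter `c > 0`:
`w_{t+1} ∈ argmin_{w ∈ Δ_N} { ⟨L_t, w⟩ − (√(t+1)/c)·H_B(w) }` with `L_t = Σ_{s=1}^t ℓ_s`. -/
def IsCarl (N : ℕ) (c : ℝ) (ℓ : ℕ → Fin N → ℝ) (w : ℕ → Fin N → ℝ) : Prop :=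
  ∀ t : ℕ, w (t + 1) ∈ stdSimplex ℝ (Fin N) ∧
    ∀ v ∈ stdSimplex ℝ (Fin N),
      (∑ i, (∑ s ∈ Finset.Icc 1 t, ℓ s i) * w (t + 1) i)
          - Real.sqrt ((t : ℝ) + 1) / c * HB (w (t + 1)) ≤
        (∑ i, (∑ s ∈ Finset.Icc 1 t, ℓ s i) * v i)
          - Real.sqrt ((t : ℝ) + 1) / c * HB v

/-- A semi-adversarial loss sequence constrained by `D`. -/
def IsSemiAdv {Ω : Type*} [MeasurableSpace Ω] (μ : Measure Ω) [IsFiniteMeasure μ]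
    {N : ℕ} (D : Set (Measure (Fin N → ℝ))) (ℓ : ℕ → Ω → Fin N → ℝ) : Prop :=
  (∀ t, Measurable (ℓ t)) ∧ (∀ t ω i, ℓ t ω i ∈ Set.Icc (0 : ℝ) 1) ∧
    ∀ t : ℕ, ∀ᵐ ω ∂μ,
      condDistrib (ℓ (t + 1)) (fun ω' (s : Fin t) => ℓ ((s : ℕ) + 1) ω') μ
        (fun s : Fin t => ℓ ((s : ℕ) + 1) ω) ∈ D

/-- The effective stochastic gap `Δ_i = inf_{λ∈D} max_{j∈[N]} E_{ℓ∼λ}[ℓ(i) − ℓ(j)]`. -/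
noncomputable def gap {N : ℕ} (D : Set (Measure (Fin N → ℝ))) (i : Fin N) : ℝ :=
  sInf ((fun lam => sSup (Set.range fun j : Fin N => ∫ v, (v i - v j) ∂lam)) '' D)

/-- The number of effective experts `N₀ = #{i : Δ_i = 0}`. -/
noncomputable def numEff {N : ℕ} (D : Set (Measure (Fin N → ℝ))) : ℕ :=
  {i : Fin N | gap D i = 0}.ncard

/-- The stochastic gap `Δ₀ = min{Δ_i : Δ_i > 0}`. -/
noncomputable def gap0 {N : ℕ} (D : Set (Measure (Fin N → ℝ))) : ℝ :=
  sInf (gap D '' {i : Fin N | 0 < gap D i})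

/-
The CARL weights are `exp (-sᵢ² / 2)`, where the margins `sᵢ` are the scaled cumulative losses
shifted by a common Lagrange multiplier. The optimal value of the regularised problem is smooth
enough in the losses that round `k + 1` costs at most `√(k + 1) - √k` times the root entropy
`∑ sᵢ exp (-sᵢ² / 2)`. The root entropy never exceeds `√(2 log N)`, and if the experts outside a
set `I` have large margins, it exceeds `√(2 log |I|)` only by an exponentially small amount.

Take for `I` the experts of gap zero. By the minimax theorem every other expert `i` loses at
least `Δᵢ` per round in conditional mean to one fixed mixture of experts, so the exponential
moments of its excess loss decay geometrically. Bounding the root entropy by `√(2 log N)` for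
the first `50 log N / Δ₀²` rounds and by `√(2 log N₀)` plus an exponential tail afterwards, and
summing the increments of the square root, gives the bound.
-/

theorem monotoneOn_of_sub_le_mul_sq {f : ℝ → ℝ} {s : Set ℝ} (hs : s.OrdConnected) {C : ℝ}
    (hf : ∀ x ∈ s, ∀ y ∈ s, x ≤ y → f x - f y ≤ C * (y - x) ^ 2) : MonotoneOn f s := by
  intro a ha b hb hab
  have hbound (n : ℕ) : f a - f b ≤ C * (b - a) ^ 2 * (1 / ((n : ℝ) + 1)) := by
    have hn : (0 : ℝ) < (n : ℝ) + 1 := by positivity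
    let x (k : ℕ) : ℝ := a + k * ((b - a) / (n + 1))
    have hx_last : x (n + 1) = b := by simp only [x]; push_cast; field_simp; ring
    have hx_succ (k : ℕ) : x (k + 1) - x k = (b - a) / (n + 1) := by
      simp only [x]; push_cast; ring
    have hx_mono : Monotone x := monotone_nat_of_le_succ fun k ↦ by
      have : 0 ≤ (b - a) / ((n : ℝ) + 1) := div_nonneg (sub_nonneg.2 hab) hn.le
      linarith [hx_succ k]
    have hx_mem (k : ℕ) (hk : k ≤ n + 1) : x k ∈ s :=
      hs.out ha hb ⟨by simpa [x] using hx_mono k.zero_le, hx_last ▸ hx_mono hk⟩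
    calc f a - f b = ∑ k ∈ Finset.range (n + 1), (f (x k) - f (x (k + 1))) := by
          rw [Finset.sum_range_sub' (fun k ↦ f (x k)), hx_last]; simp [x]
      _ ≤ ∑ _k ∈ Finset.range (n + 1), C * ((b - a) / (n + 1)) ^ 2 := by
          refine Finset.sum_le_sum fun k hk ↦ ?_
          have hk' := Finset.mem_range.1 hk
          rw [← hx_succ k]
          exact hf _ (hx_mem k hk'.le) _ (hx_mem (k + 1) hk') (hx_mono k.le_succ)
      _ = C * (b - a) ^ 2 * (1 / ((n : ℝ) + 1)) := by
          rw [Finset.sum_const, Finset.card_range, nsmul_eq_mul]; push_cast; field_simp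
  have hlim := tendsto_one_div_add_atTop_nhds_zero_nat.const_mul (C * (b - a) ^ 2)
  rw [mul_zero] at hlim
  exact sub_nonpos.1 (ge_of_tendsto' hlim hbound)

theorem supergradient_zero_le {g G : ℝ → ℝ} {K C : ℝ}
    (hg : ∀ x ∈ Set.Icc (0 : ℝ) 1, ∀ y ∈ Set.Icc (0 : ℝ) 1, x ≤ y → G y * (y - x) ≤ g y - g x)
    (hG : ∀ x ∈ Set.Icc (0 : ℝ) 1, ∀ y ∈ Set.Icc (0 : ℝ) 1, x ≤ y →
      G x - G y ≤ K * (y - x) + C * (y - x) ^ 2) :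
    G 0 ≤ g 1 - g 0 + K / 2 := by
  have hzero : (0 : ℝ) ∈ Set.Icc (0 : ℝ) 1 := by simp
  have hone : (1 : ℝ) ∈ Set.Icc (0 : ℝ) 1 := by simp
  have hG_mono : MonotoneOn (fun θ ↦ G θ + K * θ) (Set.Icc 0 1) :=
    monotoneOn_of_sub_le_mul_sq (C := C) Set.ordConnected_Icc fun x hx y hy hxy ↦ by
      linarith [hG x hx y hy hxy]
  have hg_mono : MonotoneOn (fun θ ↦ g θ - (G 0 * θ - K * θ ^ 2 / 2)) (Set.Icc 0 1) :=
    monotoneOn_of_sub_le_mul_sq (C := K / 2) Set.ordConnected_Icc fun x hx y hy hxy ↦ by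
      have hGy : G 0 ≤ G y + K * y := by simpa using hG_mono hzero hy hy.1
      nlinarith [hg x hx y hy hxy, mul_le_mul_of_nonneg_right hGy (sub_nonneg.2 hxy)]
  have := hg_mono hzero hone zero_le_one
  simp only at this
  linarith

theorem lt_add_mul_sub_of_strictConcaveOn {f : ℝ → ℝ} {s : Set ℝ} (hf : StrictConcaveOn ℝ s f)
    {x y f' : ℝ} (hx : x ∈ s) (hy : y ∈ s) (hxy : y ≠ x) (hd : HasDerivAt f f' x) :
    f y < f x + f' * (y - x) := by
  rcases hxy.lt_or_gt with h | h
  · have := hf.lt_slope_of_hasDerivAt hy hx h hd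
    rw [slope_def_field, lt_div_iff₀ (sub_pos.2 h)] at this
    linarith
  · have := hf.slope_lt_of_hasDerivAt hx hy h hd
    rw [slope_def_field, div_lt_iff₀ (sub_pos.2 h)] at this
    linarith

section Finite

variable {ι : Type*} [Fintype ι]

theorem sum_mul_sub_sq_le {q d : ι → ℝ} {a E : ℝ} (hq : ∀ i, 0 ≤ q i)
    (hd : ∀ i, d i ∈ Set.Icc 0 E) (ha : ∑ i, q i * (d i - a) = 0) :
    ∑ i, q i * (d i - a) ^ 2 ≤ E ^ 2 / 4 * ∑ i, q i :=
  calc ∑ i, q i * (d i - a) ^ 2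
      ≤ ∑ i, (E ^ 2 / 4 * q i + (E - 2 * a) * (q i * (d i - a))) := by
        refine Finset.sum_le_sum fun i _ ↦ ?_
        have hdE : 0 ≤ q i * (d i * (E - d i)) :=
          mul_nonneg (hq i) (mul_nonneg (hd i).1 (sub_nonneg.2 (hd i).2))
        nlinarith [mul_nonneg (hq i) (sq_nonneg (E - 2 * a))]
    _ = E ^ 2 / 4 * ∑ i, q i := by
        rw [Finset.sum_add_distrib, ← Finset.mul_sum, ← Finset.mul_sum, ha, mul_zero, add_zero]

theorem dotProduct_mem_Icc_of_mem_stdSimplex {u v : ι → ℝ} {a b : ℝ} (hu : u ∈ stdSimplex ℝ ι)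
    (hv : ∀ i, v i ∈ Set.Icc a b) : u ⬝ᵥ v ∈ Set.Icc a b :=
  (convex_Icc a b).sum_mem (fun i _ ↦ hu.1 i) hu.2 fun i _ ↦ hv i

theorem abs_sub_dotProduct_le_one {u v : ι → ℝ} (hu : u ∈ stdSimplex ℝ ι)
    (hv : ∀ i, v i ∈ Set.Icc (0 : ℝ) 1) (i : ι) : |v i - u ⬝ᵥ v| ≤ 1 := by
  have huv := dotProduct_mem_Icc_of_mem_stdSimplex hu hv
  exact abs_le.2 ⟨by linarith [(hv i).1, huv.2], by linarith [(hv i).2, huv.1]⟩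

theorem exists_mem_stdSimplex_forall_le_dotProduct {K : Set (ι → ℝ)} (hne : K.Nonempty)
    (hconv : Convex ℝ K) (hbdd : Bornology.IsBounded K) {g : ℝ} (hg : ∀ x ∈ K, ∃ j, g ≤ x j) :
    ∃ u ∈ stdSimplex ℝ ι, ∀ x ∈ K, g ≤ x ⬝ᵥ u := by
  classical
  obtain ⟨x₀, hx₀⟩ := hne
  have : Nonempty ι := ⟨(hg x₀ hx₀).choose⟩
  have hclosed : IsClosed {x : ι → ℝ | ∃ j, g ≤ x j} := by
    simp only [Set.ofPred_exists]
    exact isClosed_iUnion_of_finite fun j ↦ isClosed_le continuous_const (continuous_apply j)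
  have hcont_left (u : ι → ℝ) : Continuous fun x : ι → ℝ ↦ x ⬝ᵥ u := by fun_prop
  have hcont_right (x : ι → ℝ) : Continuous fun u : ι → ℝ ↦ x ⬝ᵥ u := by fun_prop
  obtain ⟨a, ha, u, hu, hsaddle⟩ := Sion.exists_isSaddlePointOn
    (X := closure K) (Y := stdSimplex ℝ ι) (f := fun x u ↦ x ⬝ᵥ u)
    ⟨x₀, subset_closure hx₀⟩ hconv.closure hbdd.isCompact_closure
    (fun u _ ↦ (hcont_left u).lowerSemicontinuous.lowerSemicontinuousOn _)
    (fun u _ ↦ (((dotProductBilin ℝ ℝ).flip u).convexOn hconv.closure).quasiconvexOn)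
    (convex_stdSimplex ℝ ι) ⟨_, single_mem_stdSimplex ℝ (Classical.arbitrary ι)⟩
    (isCompact_stdSimplex ℝ ι)
    (fun x _ ↦ (hcont_right x).upperSemicontinuous.upperSemicontinuousOn _)
    (fun x _ ↦ ((dotProductBilin ℝ ℝ x).concaveOn (convex_stdSimplex ℝ ι)).quasiconcaveOn)
  obtain ⟨j, hj⟩ := closure_minimal hg hclosed ha
  refine ⟨u, hu, fun x hx ↦ hj.trans ?_⟩
  simpa using hsaddle x (subset_closure hx) _ (single_mem_stdSimplex ℝ j)

end Finite

section GaussKernel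

/-- The unnormalised Gaussian density `e^{-s²/2}`. CARL weights are `gaussKernel` of the margins of
the experts. -/
noncomputable def gaussKernel (s : ℝ) : ℝ := Real.exp (-s ^ 2 / 2)

/-- The primitive of `gaussKernel` vanishing at `0`; it is the error function in the scaling in
which it enters `hB`. -/
noncomputable def gaussPrimitive (r : ℝ) : ℝ := ∫ x in (0 : ℝ)..r, gaussKernel x

theorem gaussKernel_pos (s : ℝ) : 0 < gaussKernel s := Real.exp_pos _

@[simp] theorem gaussKernel_zero : gaussKernel 0 = 1 := by simp [gaussKernel]

@[simp] theorem gaussPrimitive_zero : gaussPrimitive 0 = 0 := by simp [gaussPrimitive]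

@[fun_prop] theorem continuous_gaussKernel : Continuous gaussKernel := by
  unfold gaussKernel; fun_prop

theorem gaussKernel_strictAntiOn : StrictAntiOn gaussKernel (Set.Ici 0) := fun _ hr s _ hrs ↦
  Real.exp_lt_exp.2 (by nlinarith [Set.mem_Ici.1 hr])

theorem log_gaussKernel (s : ℝ) : Real.log (gaussKernel s) = -s ^ 2 / 2 := Real.log_exp _

theorem exists_gaussKernel_eq {x : ℝ} (h₀ : 0 < x) (h₁ : x ≤ 1) :
    ∃ s, 0 ≤ s ∧ gaussKernel s = x := by
  refine ⟨√(2 * -Real.log x), Real.sqrt_nonneg _, ?_⟩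
  rw [gaussKernel, Real.sq_sqrt (by linarith [Real.log_nonpos h₀.le h₁]), neg_div,
    mul_div_cancel_left₀ _ two_ne_zero, neg_neg, Real.exp_log h₀]

theorem hasDerivAt_gaussKernel (s : ℝ) : HasDerivAt gaussKernel (-(s * gaussKernel s)) s := by
  have h : HasDerivAt (fun s : ℝ ↦ -s ^ 2 / 2) (-s) s :=
    ((hasDerivAt_pow 2 s).fun_neg.div_const 2).congr_deriv (by push_cast; ring)
  exact h.exp.congr_deriv (by rw [gaussKernel]; ring)

theorem hasDerivAt_gaussPrimitive (r : ℝ) : HasDerivAt gaussPrimitive (gaussKernel r) r :=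
  continuous_gaussKernel.integral_hasStrictDerivAt 0 r |>.hasDerivAt

theorem strictConcaveOn_gaussPrimitive : StrictConcaveOn ℝ (Set.Ici 0) gaussPrimitive := by
  refine StrictAntiOn.strictConcaveOn_of_deriv (convex_Ici 0)
    (fun r _ ↦ (hasDerivAt_gaussPrimitive r).continuousAt.continuousWithinAt) ?_
  have hderiv : deriv gaussPrimitive = gaussKernel :=
    funext fun r ↦ (hasDerivAt_gaussPrimitive r).deriv
  rw [hderiv]
  exact gaussKernel_strictAntiOn.mono interior_subset

theorem sqrt_pi_div_two_mul_erf (z : ℝ) : √(Real.pi / 2) * erf z = gaussPrimitive (√2 * z) := by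
  have hint : gaussPrimitive (√2 * z) = √2 * ∫ u in (0 : ℝ)..z, Real.exp (-u ^ 2) := by
    have hsq (u : ℝ) : gaussKernel (√2 * u) = Real.exp (-u ^ 2) := by
      rw [gaussKernel, mul_pow, Real.sq_sqrt zero_le_two]; ring_nf
    simp only [gaussPrimitive, ← hsq]
    rw [intervalIntegral.mul_integral_comp_mul_left, mul_zero]
  rw [hint, erf, Real.sqrt_div Real.pi_pos.le, ← mul_assoc]
  congr 1
  have : √Real.pi ≠ 0 := (Real.sqrt_pos.2 Real.pi_pos).ne'
  field_simp
  exact (Real.sq_sqrt zero_le_two).symm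

theorem integrable_gaussKernel : Integrable gaussKernel := by
  refine (integrable_exp_neg_mul_sq (b := 1 / 2) (by norm_num)).congr (.of_forall fun x ↦ ?_)
  simp only [gaussKernel]; ring_nf

theorem integral_Ioi_gaussKernel : ∫ x in Set.Ioi 0, gaussKernel x = √(Real.pi / 2) := by
  have hfun : gaussKernel = fun x ↦ Real.exp (-(1 / 2) * x ^ 2) := by
    ext x; rw [gaussKernel]; ring_nf
  rw [hfun, integral_gaussian_Ioi, show Real.pi / (1 / 2) = Real.pi / 2 * 2 ^ 2 by ring,
    Real.sqrt_mul (by positivity), Real.sqrt_sq zero_le_two, mul_div_cancel_right₀ _ two_ne_zero]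

theorem gaussPrimitive_add_integral_Ioi (r : ℝ) :
    gaussPrimitive r + ∫ x in Set.Ioi r, gaussKernel x = √(Real.pi / 2) := by
  rw [← integral_Ioi_gaussKernel]
  exact intervalIntegral.integral_interval_add_Ioi integrable_gaussKernel.integrableOn
    integrable_gaussKernel.integrableOn

theorem gaussPrimitive_lt (r : ℝ) : gaussPrimitive r < √(Real.pi / 2) := by
  have htail : 0 < ∫ x in Set.Ioi r, gaussKernel x :=
    setIntegral_pos_iff_support_of_nonneg_ae
      (.of_forall fun x ↦ (gaussKernel_pos x).le) integrable_gaussKernel.integrableOn |>.2 <| by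
        simp [Function.support_eq_univ fun x ↦ (gaussKernel_pos x).ne']
  linarith [gaussPrimitive_add_integral_Ioi r]

theorem gaussKernel_add_le {x r : ℝ} (hx : 0 ≤ x) (hr : 0 ≤ r) :
    gaussKernel (x + r) ≤ gaussKernel x * gaussKernel r := by
  rw [gaussKernel, gaussKernel, gaussKernel, ← Real.exp_add]
  exact Real.exp_le_exp.2 (by nlinarith [mul_nonneg hx hr])

theorem sqrt_pi_div_two_sub_gaussPrimitive_le {r : ℝ} (hr : 0 ≤ r) :
    √(Real.pi / 2) - gaussPrimitive r ≤ √(Real.pi / 2) * gaussKernel r :=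
  calc √(Real.pi / 2) - gaussPrimitive r = ∫ x in Set.Ioi r, gaussKernel x := by
        rw [← gaussPrimitive_add_integral_Ioi r, add_sub_cancel_left]
    _ = ∫ x in Set.Ioi 0, gaussKernel (x + r) := by
        have := (measurePreserving_add_right volume r).setIntegral_preimage_emb
          (measurableEmbedding_addRight r) gaussKernel (Set.Ioi r)
        rw [← this, Set.preimage_add_const_Ioi, sub_self]
    _ ≤ ∫ x in Set.Ioi 0, gaussKernel x * gaussKernel r :=
        setIntegral_mono_on (integrable_gaussKernel.comp_add_right r).integrableOn
          (integrable_gaussKernel.mul_const _).integrableOn measurableSet_Ioi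
          fun x hx ↦ gaussKernel_add_le hx.le hr
    _ = √(Real.pi / 2) * gaussKernel r := by rw [integral_mul_const, integral_Ioi_gaussKernel]

theorem lipschitzWith_mul_gaussKernel : LipschitzWith 1 fun s ↦ s * gaussKernel s := by
  have hderiv (s : ℝ) : HasDerivAt (fun s ↦ s * gaussKernel s) ((1 - s ^ 2) * gaussKernel s) s :=
    ((hasDerivAt_id s).mul (hasDerivAt_gaussKernel s)).congr_deriv (by simp only [id]; ring)
  refine lipschitzWith_of_nnnorm_deriv_le (fun s ↦ (hderiv s).differentiableAt) fun s ↦ ?_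
  rw [(hderiv s).deriv, ← NNReal.coe_le_coe, coe_nnnorm, Real.norm_eq_abs, abs_mul,
    abs_of_pos (gaussKernel_pos s), gaussKernel, neg_div, Real.exp_neg, ← div_eq_mul_inv,
    NNReal.coe_one, div_le_one (Real.exp_pos _), abs_le]
  have hexp := Real.quadratic_le_exp_of_nonneg (x := s ^ 2 / 2) (by positivity)
  constructor <;> nlinarith [sq_nonneg (s ^ 2 / 2 - 1), sq_nonneg s]

theorem exists_gaussKernel_sub_gaussKernel_eq {s r : ℝ} (hs : 0 ≤ s) (hr : 0 ≤ r) :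
    ∃ q, 0 ≤ q ∧ q ≤ s * gaussKernel s + |r - s| ∧
      gaussKernel s - gaussKernel r = q * (r - s) := by
  obtain ⟨c, hc, hslope⟩ := domain_mvt (x := s) (y := r)
    (fun x _ ↦ (hasDerivAt_gaussKernel x).hasFDerivAt.hasFDerivWithinAt) convex_univ
    (Set.mem_univ _) (Set.mem_univ _)
  rw [segment_eq_uIcc] at hc
  have hc₀ : 0 ≤ c := (le_inf hs hr).trans hc.1
  refine ⟨c * gaussKernel c, mul_nonneg hc₀ (gaussKernel_pos c).le, ?_, ?_⟩
  · have hlip := lipschitzWith_mul_gaussKernel.dist_le_mul c s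
    rw [Real.dist_eq, Real.dist_eq, NNReal.coe_one, one_mul] at hlip
    linarith [le_abs_self (c * gaussKernel c - s * gaussKernel s), Set.abs_sub_left_of_mem_uIcc hc]
  · simp only [ContinuousLinearMap.toSpanSingleton_apply, smul_eq_mul] at hslope
    linarith

end GaussKernel

section HB

variable {N : ℕ}

theorem hB_zero : hB N 0 = -√(Real.pi / 2) := if_pos rfl

theorem hB_gaussKernel {s : ℝ} (hs : 0 ≤ s) :
    hB N (gaussKernel s) = s * gaussKernel s - gaussPrimitive s +
      gaussKernel s * ((N : ℝ) - 1) * √(Real.pi / 2) := by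
  have hsqrt : √(2 * (s ^ 2 / 2)) = s := by
    rw [mul_div_cancel₀ _ two_ne_zero, Real.sqrt_sq hs]
  rw [hB, if_neg (gaussKernel_pos s).ne', sqrt_pi_div_two_mul_erf, one_div, Real.log_inv,
    log_gaussKernel, neg_div, neg_neg, ← Real.sqrt_mul zero_le_two, hsqrt]
  ring

theorem hB_one : hB N 1 = ((N : ℝ) - 1) * √(Real.pi / 2) := by
  simpa using hB_gaussKernel (N := N) le_rfl

theorem hB_lt_tangent {s x : ℝ} (hs : 0 ≤ s) (hx₀ : 0 ≤ x) (hx₁ : x ≤ 1) (hne : x ≠ gaussKernel s) :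
    hB N x < hB N (gaussKernel s) +
      (s + ((N : ℝ) - 1) * √(Real.pi / 2)) * (x - gaussKernel s) := by
  rw [hB_gaussKernel hs]
  rcases hx₀.eq_or_lt with rfl | hpos
  · rw [hB_zero]
    linarith [gaussPrimitive_lt s]
  · obtain ⟨r, hr, rfl⟩ := exists_gaussKernel_eq hpos hx₁
    have := lt_add_mul_sub_of_strictConcaveOn strictConcaveOn_gaussPrimitive (Set.mem_Ici.2 hr)
      (Set.mem_Ici.2 hs) (fun h ↦ hne (by rw [h])) (hasDerivAt_gaussPrimitive r)
    rw [hB_gaussKernel hr]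
    linarith

theorem hB_gaussKernel_le {s : ℝ} (hs : 0 ≤ s) :
    hB N (gaussKernel s) ≤
      s * gaussKernel s + √(Real.pi / 2) * (N * gaussKernel s - 1) := by
  rw [hB_gaussKernel hs]
  linarith [sqrt_pi_div_two_sub_gaussPrimitive_le hs]

variable {s : Fin N → ℝ}

theorem HB_lt_tangent (hs : ∀ i, 0 ≤ s i) (hsum : ∑ i, gaussKernel (s i) = 1)
    {v : Fin N → ℝ} (hv : v ∈ stdSimplex ℝ (Fin N)) (hne : v ≠ fun i ↦ gaussKernel (s i)) :
    HB v < HB (fun i ↦ gaussKernel (s i)) + ∑ i, s i * (v i - gaussKernel (s i)) := by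
  set b : ℝ := ((N : ℝ) - 1) * √(Real.pi / 2)
  have hlt (i : Fin N) (hi : v i ≠ gaussKernel (s i)) :
      hB N (v i) < hB N (gaussKernel (s i)) + (s i + b) * (v i - gaussKernel (s i)) :=
    hB_lt_tangent (hs i) (hv.1 i) (mem_Icc_of_mem_stdSimplex hv i).2 hi
  have hle (i : Fin N) :
      hB N (v i) ≤ hB N (gaussKernel (s i)) + (s i + b) * (v i - gaussKernel (s i)) := by
    by_cases hi : v i = gaussKernel (s i)
    · simp [hi]
    · exact (hlt i hi).le
  obtain ⟨i, hi⟩ := Function.ne_iff.1 hne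
  calc HB v < ∑ i, (hB N (gaussKernel (s i)) + (s i + b) * (v i - gaussKernel (s i))) :=
        Finset.sum_lt_sum (fun i _ ↦ hle i) ⟨i, Finset.mem_univ i, hlt i hi⟩
    _ = HB (fun i ↦ gaussKernel (s i)) + ∑ i, s i * (v i - gaussKernel (s i)) := by
        have hb : ∑ i, b * (v i - gaussKernel (s i)) = 0 := by
          rw [← Finset.mul_sum, Finset.sum_sub_distrib, hsum, hv.2, sub_self, mul_zero]
        simp only [HB, add_mul, Finset.sum_add_distrib, hb, add_zero]

theorem HB_gaussKernel_le (hs : ∀ i, 0 ≤ s i) (hsum : ∑ i, gaussKernel (s i) = 1) :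
    HB (fun i ↦ gaussKernel (s i)) ≤ ∑ i, s i * gaussKernel (s i) := by
  refine (Finset.sum_le_sum fun i _ ↦ hB_gaussKernel_le (hs i)).trans_eq ?_
  simp [Finset.sum_add_distrib, ← Finset.mul_sum, hsum]

theorem HB_single (i : Fin N) : HB (Pi.single i 1) = 0 := by
  have hN : 1 ≤ N := i.pos
  have hrest : ∑ j ∈ Finset.univ.erase i, hB N ((Pi.single i (1 : ℝ) : Fin N → ℝ) j) =
      ∑ j ∈ Finset.univ.erase i, hB N 0 :=
    Finset.sum_congr rfl fun _ hj ↦ by rw [Pi.single_eq_of_ne (Finset.ne_of_mem_erase hj)]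
  rw [HB, ← Finset.add_sum_erase _ _ (Finset.mem_univ i), hrest, Pi.single_eq_same, hB_one, hB_zero,
    Finset.sum_const, Finset.card_erase_of_mem (Finset.mem_univ i)]
  simp [Nat.cast_sub hN]

end HB

section DualPoint

variable {ι : Type*} [Fintype ι]

theorem exists_sum_gaussKernel_sub_eq_one [Nonempty ι] (y : ι → ℝ) :
    ∃ lam, (∀ i, lam ≤ y i) ∧ ∑ i, gaussKernel (y i - lam) = 1 := by
  obtain ⟨m, hm⟩ := Finite.exists_min y
  have hcard : (1 : ℝ) ≤ Fintype.card ι := by exact_mod_cast Fintype.card_pos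
  obtain ⟨r, hr, hφr⟩ := exists_gaussKernel_eq (inv_pos.2 (zero_lt_one.trans_le hcard))
    (inv_le_one_of_one_le₀ hcard)
  have hcont : ContinuousOn (fun lam ↦ ∑ i, gaussKernel (y i - lam)) (Set.Icc (y m - r) (y m)) := by
    fun_prop
  have hlow : ∑ i, gaussKernel (y i - (y m - r)) ≤ 1 :=
    calc ∑ i, gaussKernel (y i - (y m - r)) ≤ ∑ _i : ι, gaussKernel r :=
          Finset.sum_le_sum fun i _ ↦ gaussKernel_strictAntiOn.antitoneOn hr
            (Set.mem_Ici.2 (by linarith [hm i])) (by linarith [hm i])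
      _ = 1 := by simp [hφr]
  have hhigh : 1 ≤ ∑ i, gaussKernel (y i - y m) :=
    calc 1 = gaussKernel (y m - y m) := by simp
      _ ≤ ∑ i, gaussKernel (y i - y m) :=
          Finset.single_le_sum (f := fun i ↦ gaussKernel (y i - y m))
            (fun _ _ ↦ (gaussKernel_pos _).le) (Finset.mem_univ m)
  obtain ⟨lam, hlam, hsum⟩ := intermediate_value_Icc (sub_le_self _ hr) hcont ⟨hlow, hhigh⟩
  exact ⟨lam, fun i ↦ hlam.2.trans (hm i), hsum⟩

/-- `∑ i, w i * √(2 * log (1 / w i))` in terms of `s i = √(2 * log (1 / w i))`, that is, of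
`w i = gaussKernel (s i)`. -/
noncomputable def rootEntropy (s : ι → ℝ) : ℝ := ∑ i, s i * gaussKernel (s i)

variable [Nonempty ι]

/-- The Lagrange multiplier of the constraint `∑ i, w i = 1` in the CARL optimisation problem with
scaled cumulative losses `y`. -/
noncomputable def carlShift (y : ι → ℝ) : ℝ := (exists_sum_gaussKernel_sub_eq_one y).choose

/-- The amount by which the scaled cumulative loss of each expert exceeds the Lagrange multiplier;
the paper's `√(2 * log (1 / w i))`. -/
noncomputable def carlMargin (y : ι → ℝ) (i : ι) : ℝ := y i - carlShift y

/-- The solution of the CARL optimisation problem with scaled cumulative losses `y`. -/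
noncomputable def carlWeights (y : ι → ℝ) (i : ι) : ℝ := gaussKernel (carlMargin y i)

theorem carlMargin_nonneg (y : ι → ℝ) (i : ι) : 0 ≤ carlMargin y i :=
  sub_nonneg.2 ((exists_sum_gaussKernel_sub_eq_one y).choose_spec.1 i)

theorem sum_gaussKernel_carlMargin (y : ι → ℝ) : ∑ i, gaussKernel (carlMargin y i) = 1 :=
  (exists_sum_gaussKernel_sub_eq_one y).choose_spec.2

theorem carlWeights_mem_stdSimplex (y : ι → ℝ) : carlWeights y ∈ stdSimplex ℝ ι :=
  ⟨fun _ ↦ (gaussKernel_pos _).le, sum_gaussKernel_carlMargin y⟩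

theorem sub_dotProduct_le_carlMargin {u : ι → ℝ} (hu : u ∈ stdSimplex ℝ ι) (y : ι → ℝ) (i : ι) :
    y i - u ⬝ᵥ y ≤ carlMargin y i :=
  sub_le_sub_left ((convex_Ici (carlShift y)).sum_mem (fun j _ ↦ hu.1 j) hu.2
    fun j _ ↦ sub_nonneg.1 (carlMargin_nonneg y j)) _

theorem carlShift_le_add {y z : ι → ℝ} {E : ℝ} (h : ∀ i, y i ≤ z i + E) :
    carlShift y ≤ carlShift z + E := by
  by_contra! hlt
  have hsum : ∑ i, gaussKernel (carlMargin z i) < ∑ i, gaussKernel (carlMargin y i) :=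
    Finset.sum_lt_sum_of_nonempty Finset.univ_nonempty fun i _ ↦
      gaussKernel_strictAntiOn (carlMargin_nonneg y i) (carlMargin_nonneg z i) (by
        simp only [carlMargin]
        linarith [h i])
  simp [sum_gaussKernel_carlMargin] at hsum

theorem dotProduct_carlWeights_sub_le {y d : ι → ℝ} {E : ℝ} (hd : ∀ i, d i ∈ Set.Icc 0 E) :
    d ⬝ᵥ carlWeights y - d ⬝ᵥ carlWeights (y + d) ≤
      E ^ 2 / 4 * (rootEntropy (carlMargin y) + Fintype.card ι * E) := by
  set a := carlShift (y + d) - carlShift y with ha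
  have ha₀ : 0 ≤ a := sub_nonneg.2 <| by
    simpa using carlShift_le_add (y := y) (z := y + d) (E := 0) fun i ↦ by simp [(hd i).1]
  have haE : a ≤ E := sub_le_iff_le_add'.2 <| carlShift_le_add fun i ↦ by simp [(hd i).2]
  have hstep (i : ι) : carlMargin (y + d) i - carlMargin y i = d i - a := by
    simp only [carlMargin, Pi.add_apply, ha]; ring
  choose q hq₀ hq_le hq using fun i ↦ exists_gaussKernel_sub_gaussKernel_eq
    (carlMargin_nonneg y i) (carlMargin_nonneg (y + d) i)
  simp only [hstep] at hq_le hq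
  have hmean : ∑ i, q i * (d i - a) = 0 := by
    simp only [← hq, Finset.sum_sub_distrib, sum_gaussKernel_carlMargin, sub_self]
  calc d ⬝ᵥ carlWeights y - d ⬝ᵥ carlWeights (y + d)
      = ∑ i, (q i * (d i - a) ^ 2 + a * (q i * (d i - a))) := by
        rw [← dotProduct_sub]
        refine Finset.sum_congr rfl fun i _ ↦ ?_
        rw [Pi.sub_apply, carlWeights, carlWeights, hq]; ring
    _ = ∑ i, q i * (d i - a) ^ 2 := by
        rw [Finset.sum_add_distrib, ← Finset.mul_sum, hmean, mul_zero, add_zero]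
    _ ≤ E ^ 2 / 4 * ∑ i, q i := sum_mul_sub_sq_le hq₀ hd hmean
    _ ≤ E ^ 2 / 4 * ∑ i, (carlMargin y i * gaussKernel (carlMargin y i) + E) := by
        gcongr with i
        exact (hq_le i).trans (add_le_add_right
          (abs_le.2 ⟨by linarith [(hd i).1], by linarith [(hd i).2]⟩) _)
    _ = E ^ 2 / 4 * (rootEntropy (carlMargin y) + Fintype.card ι * E) := by
        simp [Finset.sum_add_distrib, rootEntropy]

end DualPoint

section Potential

variable {N : ℕ} [Nonempty (Fin N)]

/-- The optimal value of the CARL optimisation problem with scaled cumulative losses `y`. -/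
noncomputable def carlPotential (y : Fin N → ℝ) : ℝ := y ⬝ᵥ carlWeights y - HB (carlWeights y)

theorem carlPotential_lt {y v : Fin N → ℝ} (hv : v ∈ stdSimplex ℝ (Fin N))
    (hne : v ≠ carlWeights y) : carlPotential y < y ⬝ᵥ v - HB v := by
  have hlin : ∑ i, carlMargin y i * (v i - carlWeights y i) = y ⬝ᵥ v - y ⬝ᵥ carlWeights y := by
    have hshift : ∑ i, carlShift y * (v i - carlWeights y i) = 0 := by
      rw [← Finset.mul_sum, Finset.sum_sub_distrib, hv.2, (carlWeights_mem_stdSimplex y).2,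
        sub_self, mul_zero]
    simp only [carlMargin, sub_mul, Finset.sum_sub_distrib, hshift, sub_zero]
    rw [← dotProduct_sub]; rfl
  have := HB_lt_tangent (carlMargin_nonneg y) (sum_gaussKernel_carlMargin y) hv hne
  change HB v < HB (carlWeights y) + ∑ i, carlMargin y i * (v i - carlWeights y i) at this
  rw [carlPotential]
  linarith

theorem carlPotential_le (y : Fin N → ℝ) {v : Fin N → ℝ} (hv : v ∈ stdSimplex ℝ (Fin N)) :
    carlPotential y ≤ y ⬝ᵥ v - HB v := by
  by_cases hne : v = carlWeights y
  · rw [hne, carlPotential]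
  · exact (carlPotential_lt hv hne).le

theorem dotProduct_carlWeights_add_le (y d : Fin N → ℝ) :
    d ⬝ᵥ carlWeights (y + d) ≤ carlPotential (y + d) - carlPotential y := by
  have := carlPotential_le y (carlWeights_mem_stdSimplex (y + d))
  rw [carlPotential, add_dotProduct]
  linarith

theorem dotProduct_carlWeights_le {y d : Fin N → ℝ} {E R : ℝ} (hd : ∀ i, d i ∈ Set.Icc 0 E)
    (hR : ∀ θ ∈ Set.Icc (0 : ℝ) 1, rootEntropy (carlMargin (y + θ • d)) ≤ R) :
    d ⬝ᵥ carlWeights y ≤ carlPotential (y + d) - carlPotential y + E ^ 2 / 8 * R := by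
  have hshift (x z : ℝ) : y + z • d = y + x • d + (z - x) • d := by module
  have hpot : ∀ x ∈ Set.Icc (0 : ℝ) 1, ∀ z ∈ Set.Icc (0 : ℝ) 1, x ≤ z →
      d ⬝ᵥ carlWeights (y + z • d) * (z - x) ≤
        carlPotential (y + z • d) - carlPotential (y + x • d) := fun x _ z _ _ ↦ by
    have := dotProduct_carlWeights_add_le (y + x • d) ((z - x) • d)
    rwa [← hshift, smul_dotProduct, smul_eq_mul, mul_comm] at this
  have hweights : ∀ x ∈ Set.Icc (0 : ℝ) 1, ∀ z ∈ Set.Icc (0 : ℝ) 1, x ≤ z →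
      d ⬝ᵥ carlWeights (y + x • d) - d ⬝ᵥ carlWeights (y + z • d) ≤
        E ^ 2 / 4 * R * (z - x) + E ^ 3 / 4 * Fintype.card (Fin N) * (z - x) ^ 2 := by
    intro x hx z _ hxz
    rcases hxz.eq_or_lt with rfl | hlt
    · simp
    have hpos := sub_pos.2 hlt
    have hstab := dotProduct_carlWeights_sub_le (y := y + x • d) (d := (z - x) • d)
      (E := (z - x) * E) fun i ↦
        ⟨mul_nonneg hpos.le (hd i).1, mul_le_mul_of_nonneg_left (hd i).2 hpos.le⟩
    rw [← hshift, smul_dotProduct, smul_dotProduct, smul_eq_mul, smul_eq_mul, ← mul_sub] at hstab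
    have hRx := mul_le_mul_of_nonneg_left (hR x hx) (by positivity : 0 ≤ (z - x) * E ^ 2 / 4)
    refine le_of_mul_le_mul_left ?_ hpos
    linarith [mul_le_mul_of_nonneg_left hRx hpos.le]
  have := supergradient_zero_le (g := fun θ ↦ carlPotential (y + θ • d)) hpot hweights
  simp only [zero_smul, add_zero, one_smul] at this
  linarith

end Potential

section Regret

variable {N : ℕ} {c : ℝ} {ℓ w : ℕ → Fin N → ℝ}

theorem one_div_two_mul_sqrt_le_sqrt_sub_sqrt {x : ℝ} (hx : 0 ≤ x) :
    1 / (2 * √(x + 1)) ≤ √(x + 1) - √x := by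
  rw [div_le_iff₀ (by positivity)]
  nlinarith [Real.sq_sqrt hx, Real.sq_sqrt (by linarith : 0 ≤ x + 1), sq_nonneg (√(x + 1) - √x)]

namespace IsCarl

variable [Nonempty (Fin N)]

theorem eq_carlWeights (h : IsCarl N c ℓ w) (hc : 0 < c) (k : ℕ) :
    w (k + 1) = carlWeights ((c / √((k : ℝ) + 1)) • ∑ s ∈ Finset.Icc 1 k, ℓ s) := by
  set η := c / √((k : ℝ) + 1) with hη
  have hη_pos : 0 < η := by positivity
  have hη_inv : √((k : ℝ) + 1) / c = η⁻¹ := by rw [hη, inv_div]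
  by_contra hne
  have hlt := carlPotential_lt (h k).1 hne
  have hmin := (h k).2 _ (carlWeights_mem_stdSimplex (η • ∑ s ∈ Finset.Icc 1 k, ℓ s))
  simp only [hη_inv, ← Finset.sum_apply] at hmin
  refine (mul_le_mul_of_nonneg_left hmin hη_pos.le).not_gt ?_
  rw [carlPotential, smul_dotProduct, smul_dotProduct, smul_eq_mul, smul_eq_mul] at hlt
  rw [mul_sub, mul_sub, mul_inv_cancel_left₀ hη_pos.ne', mul_inv_cancel_left₀ hη_pos.ne']
  exact hlt

/- The increase `√(k + 1) - √k` of the regularisation weight pays both for the change of regulariser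
and for the instability of the weights, which is of size `1 / (2 √(k + 1))` because a round shifts
the scaled losses by at most `c / √(k + 1)`. -/
theorem dotProduct_add_dotProduct_le (h : IsCarl N c ℓ w) (hc : 0 < c)
    (hℓ : ∀ t i, ℓ t i ∈ Set.Icc 0 1) {k : ℕ} {R : ℝ}
    (hR : ∀ θ ∈ Set.Icc (0 : ℝ) 1, rootEntropy (carlMargin
      ((c / √((k : ℝ) + 1)) • (∑ s ∈ Finset.Icc 1 k, ℓ s + θ • ℓ (k + 1)))) ≤ R)
    {v : Fin N → ℝ} (hv : v ∈ stdSimplex ℝ (Fin N)) :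
    (∑ s ∈ Finset.Icc 1 k, ℓ s) ⬝ᵥ w (k + 1) - √k / c * HB (w (k + 1))
        + ℓ (k + 1) ⬝ᵥ w (k + 1) ≤
      (∑ s ∈ Finset.Icc 1 (k + 1), ℓ s) ⬝ᵥ v - √((k : ℝ) + 1) / c * HB v
        + (1 / c + c / 4) * ((√((k : ℝ) + 1) - √k) * R) := by
  set τ := √((k : ℝ) + 1)
  set L := ∑ s ∈ Finset.Icc 1 k, ℓ s with hL
  have hτ : 0 < τ := by positivity
  have hη : 0 < c / τ := by positivity
  set y := (c / τ) • L with hy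
  have hw : w (k + 1) = carlWeights y := h.eq_carlWeights hc k
  have hR₀ : rootEntropy (carlMargin y) ≤ R := by simpa [hy] using hR 0 (by simp)
  have hHB : HB (w (k + 1)) ≤ R := hw ▸
    (HB_gaussKernel_le (carlMargin_nonneg y) (sum_gaussKernel_carlMargin y)).trans hR₀
  have hR_nonneg : 0 ≤ R := hR₀.trans' <|
    Finset.sum_nonneg fun i _ ↦ mul_nonneg (carlMargin_nonneg y i) (gaussKernel_pos _).le
  have hstable := dotProduct_carlWeights_le (y := y) (d := (c / τ) • ℓ (k + 1)) (E := c / τ)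
    (fun i ↦ ⟨mul_nonneg hη.le (hℓ _ i).1, mul_le_of_le_one_right hη.le (hℓ _ i).2⟩)
    (fun θ hθ ↦ by simpa only [hy, smul_add, smul_comm θ] using hR θ hθ)
  have hpot := carlPotential_le (y + (c / τ) • ℓ (k + 1)) hv
  rw [← hw, carlPotential.eq_def y, ← hw] at hstable
  have hround : ℓ (k + 1) ⬝ᵥ w (k + 1) ≤ (L + ℓ (k + 1)) ⬝ᵥ v - τ / c * HB v - L ⬝ᵥ w (k + 1)
      + τ / c * HB (w (k + 1)) + c / 4 * (1 / (2 * τ) * R) := by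
    have := mul_le_mul_of_nonneg_left (hstable.trans (add_le_add_left (sub_le_sub_right hpot _) _))
      (by positivity : 0 ≤ τ / c)
    rw [hy, ← smul_add, smul_dotProduct, smul_dotProduct, smul_dotProduct] at this
    simp only [smul_eq_mul] at this
    field_simp at this ⊢
    linarith
  have hstab_le : c / 4 * (1 / (2 * τ) * R) ≤ c / 4 * ((τ - √k) * R) := by
    gcongr
    exact one_div_two_mul_sqrt_le_sqrt_sub_sqrt k.cast_nonneg
  have hreg_le : (τ - √k) / c * HB (w (k + 1)) ≤ (τ - √k) / c * R :=
    mul_le_mul_of_nonneg_left hHB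
      (div_nonneg (sub_nonneg.2 (Real.sqrt_le_sqrt (by linarith))) hc.le)
  rw [Finset.sum_Icc_succ_top (by omega), ← hL]
  linear_combination hround + hstab_le + hreg_le

theorem sum_dotProduct_le (h : IsCarl N c ℓ w) (hc : 0 < c) (hℓ : ∀ t i, ℓ t i ∈ Set.Icc 0 1)
    {R : ℕ → ℝ} (hR : ∀ k : ℕ, ∀ θ ∈ Set.Icc (0 : ℝ) 1, rootEntropy (carlMargin
      ((c / √((k : ℝ) + 1)) • (∑ s ∈ Finset.Icc 1 k, ℓ s + θ • ℓ (k + 1)))) ≤ R k)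
    (T : ℕ) {v : Fin N → ℝ} (hv : v ∈ stdSimplex ℝ (Fin N)) :
    ∑ t ∈ Finset.Icc 1 T, ℓ t ⬝ᵥ w t ≤
      (∑ s ∈ Finset.Icc 1 T, ℓ s) ⬝ᵥ v - √T / c * HB v
        + (1 / c + c / 4) * ∑ k ∈ Finset.range T, (√((k : ℝ) + 1) - √k) * R k := by
  induction T generalizing v with
  | zero => simp
  | succ k ih =>
    have hround := h.dotProduct_add_dotProduct_le hc hℓ (hR k) hv
    rw [Finset.sum_Icc_succ_top (by omega), Finset.sum_range_succ, mul_add, Nat.cast_add_one]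
    linarith [ih (h k).1]

theorem sum_dotProduct_sub_le (h : IsCarl N c ℓ w) (hc : 0 < c) (hℓ : ∀ t i, ℓ t i ∈ Set.Icc 0 1)
    {R : ℕ → ℝ} (hR : ∀ k : ℕ, ∀ θ ∈ Set.Icc (0 : ℝ) 1, rootEntropy (carlMargin
      ((c / √((k : ℝ) + 1)) • (∑ s ∈ Finset.Icc 1 k, ℓ s + θ • ℓ (k + 1)))) ≤ R k)
    (T : ℕ) (i : Fin N) :
    ∑ t ∈ Finset.Icc 1 T, (ℓ t ⬝ᵥ w t - ℓ t i) ≤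
      (1 / c + c / 4) * ∑ k ∈ Finset.range T, (√((k : ℝ) + 1) - √k) * R k := by
  have := h.sum_dotProduct_le hc hℓ hR T (single_mem_stdSimplex ℝ i)
  rw [HB_single, dotProduct_single_one, Finset.sum_apply] at this
  rw [Finset.sum_sub_distrib]
  linarith

end IsCarl

end Regret

section Entropy

variable {ι : Type*} [Fintype ι] {s : ι → ℝ}

theorem sum_sq_mul_gaussKernel_le [DecidableEq ι] (hs : ∑ i, gaussKernel (s i) = 1)
    (I : Finset ι) :
    ∑ i ∈ I, s i ^ 2 * gaussKernel (s i) ≤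
      2 * Real.log I.card + 2 * ∑ i ∈ Iᶜ, gaussKernel (s i) := by
  rcases I.eq_empty_or_nonempty with rfl | hI
  · simp [hs]
  have hcard : (0 : ℝ) < I.card := by exact_mod_cast hI.card_pos
  have hlog : 0 ≤ Real.log I.card := Real.log_natCast_nonneg _
  have hsplit : ∑ i ∈ I, gaussKernel (s i) + ∑ i ∈ Iᶜ, gaussKernel (s i) = 1 :=
    (Finset.sum_add_sum_compl I _).trans hs
  have hcompl : 0 ≤ ∑ i ∈ Iᶜ, gaussKernel (s i) :=
    Finset.sum_nonneg fun i _ ↦ (gaussKernel_pos _).le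
  have hterm (i : ι) : s i ^ 2 * gaussKernel (s i) ≤
      2 * Real.log I.card * gaussKernel (s i) + 2 * ((I.card : ℝ)⁻¹ - gaussKernel (s i)) := by
    have hφ := gaussKernel_pos (s i)
    have hlog_le := Real.log_le_sub_one_of_pos (inv_pos.2 (mul_pos hcard hφ))
    rw [Real.log_inv, Real.log_mul hcard.ne' hφ.ne', log_gaussKernel] at hlog_le
    have := mul_le_mul_of_nonneg_right hlog_le hφ.le
    rw [sub_mul, mul_inv, inv_mul_cancel_right₀ hφ.ne'] at this
    linarith
  calc ∑ i ∈ I, s i ^ 2 * gaussKernel (s i)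
      ≤ ∑ i ∈ I, (2 * Real.log I.card * gaussKernel (s i) +
          2 * ((I.card : ℝ)⁻¹ - gaussKernel (s i))) := Finset.sum_le_sum fun i _ ↦ hterm i
    _ = 2 * Real.log I.card * ∑ i ∈ I, gaussKernel (s i)
          + 2 * (1 - ∑ i ∈ I, gaussKernel (s i)) := by
        rw [Finset.sum_add_distrib, ← Finset.mul_sum, ← Finset.mul_sum, Finset.sum_sub_distrib,
          Finset.sum_const, nsmul_eq_mul, mul_inv_cancel₀ hcard.ne']
    _ ≤ 2 * Real.log I.card + 2 * ∑ i ∈ Iᶜ, gaussKernel (s i) := by nlinarith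

theorem sum_mul_gaussKernel_le_sqrt [DecidableEq ι] (hs : ∑ i, gaussKernel (s i) = 1)
    (I : Finset ι) :
    ∑ i ∈ I, s i * gaussKernel (s i) ≤
      √(2 * Real.log I.card + 2 * ∑ i ∈ Iᶜ, gaussKernel (s i)) := by
  have hφ (i : ι) : 0 ≤ gaussKernel (s i) := (gaussKernel_pos _).le
  have hmass : ∑ i ∈ I, gaussKernel (s i) ≤ 1 :=
    hs ▸ Finset.sum_le_univ_sum_of_nonneg hφ
  have hsq (i : ι) : 0 ≤ s i ^ 2 * gaussKernel (s i) := mul_nonneg (sq_nonneg _) (hφ i)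
  refine Real.le_sqrt_of_sq_le ?_
  calc (∑ i ∈ I, s i * gaussKernel (s i)) ^ 2
      ≤ (∑ i ∈ I, gaussKernel (s i)) * ∑ i ∈ I, s i ^ 2 * gaussKernel (s i) :=
        Finset.sum_sq_le_sum_mul_sum_of_sq_le_mul I (fun i _ ↦ hφ i) (fun i _ ↦ hsq i)
          fun i _ ↦ le_of_eq (by ring)
    _ ≤ ∑ i ∈ I, s i ^ 2 * gaussKernel (s i) :=
        mul_le_of_le_one_left (Finset.sum_nonneg fun i _ ↦ hsq i) hmass
    _ ≤ _ := sum_sq_mul_gaussKernel_le hs I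

theorem gaussKernel_eq_exp_sq (r : ℝ) : gaussKernel r = Real.exp (-r ^ 2 / 4) ^ 2 := by
  rw [gaussKernel, ← Real.exp_nat_mul]; push_cast; ring_nf

theorem mul_gaussKernel_le (r : ℝ) : r * gaussKernel r ≤ 3 / 2 * Real.exp (-r ^ 2 / 4) := by
  have hle : r * Real.exp (-r ^ 2 / 4) ≤ 3 / 2 := by
    rw [neg_div, Real.exp_neg, ← div_eq_mul_inv, div_le_iff₀ (Real.exp_pos _)]
    nlinarith [Real.add_one_le_exp (r ^ 2 / 4), sq_nonneg (r - 4 / 3)]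
  rw [gaussKernel_eq_exp_sq, sq, ← mul_assoc]
  exact mul_le_mul_of_nonneg_right hle (Real.exp_pos _).le

theorem rootEntropy_le_sqrt_log (hs : ∑ i, gaussKernel (s i) = 1) :
    rootEntropy s ≤ √(2 * Real.log (Fintype.card ι)) := by
  classical
  simpa [rootEntropy] using sum_mul_gaussKernel_le_sqrt hs Finset.univ

theorem rootEntropy_le_sqrt_log_add [DecidableEq ι] (hs : ∑ i, gaussKernel (s i) = 1)
    (I : Finset ι) :
    rootEntropy s ≤ √(2 * Real.log I.card) + 3 * ∑ i ∈ Iᶜ, Real.exp (-s i ^ 2 / 4) := by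
  set ε := ∑ i ∈ Iᶜ, Real.exp (-s i ^ 2 / 4)
  have hε : 0 ≤ ε := Finset.sum_nonneg fun i _ ↦ (Real.exp_pos _).le
  have hlog : 0 ≤ 2 * Real.log I.card := mul_nonneg zero_le_two (Real.log_natCast_nonneg _)
  have hmass : ∑ i ∈ Iᶜ, gaussKernel (s i) ≤ ε ^ 2 := by
    simp only [gaussKernel_eq_exp_sq]
    exact Finset.sum_sq_le_sq_sum_of_nonneg fun i _ ↦ (Real.exp_pos _).le
  have hmain : ∑ i ∈ I, s i * gaussKernel (s i) ≤ √(2 * Real.log I.card) + 3 / 2 * ε := by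
    refine (sum_mul_gaussKernel_le_sqrt hs I).trans ((Real.sqrt_le_left (by positivity)).2 ?_)
    nlinarith [Real.sq_sqrt hlog, mul_nonneg (Real.sqrt_nonneg (2 * Real.log I.card)) hε]
  have hrest : ∑ i ∈ Iᶜ, s i * gaussKernel (s i) ≤ 3 / 2 * ε := by
    rw [Finset.mul_sum]
    exact Finset.sum_le_sum fun i _ ↦ mul_gaussKernel_le (s i)
  rw [rootEntropy, ← Finset.sum_add_sum_compl I]
  linarith

theorem exp_neg_carlMargin_sq_le [Nonempty ι] {c τ α θ : ℝ} (hc : 0 < c) (hτ : 0 < τ) (hα : 0 ≤ α)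
    (hθ : θ ∈ Set.Icc (0 : ℝ) 1) {u d : ι → ℝ} (hu : u ∈ stdSimplex ℝ ι)
    (hd : ∀ i, d i ∈ Set.Icc (0 : ℝ) 1) (L : ι → ℝ) (i : ι) :
    Real.exp (-carlMargin ((c / τ) • (L + θ • d)) i ^ 2 / 4) ≤
      Real.exp (α + α ^ 2 * τ ^ 2 / c ^ 2) * Real.exp (-α * (L i - u ⬝ᵥ L)) := by
  set m := carlMargin ((c / τ) • (L + θ • d)) i
  have hm : c / τ * (L i - u ⬝ᵥ L - 1) ≤ m := by
    refine le_trans ?_ (sub_dotProduct_le_carlMargin hu _ i)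
    have hud := (dotProduct_mem_Icc_of_mem_stdSimplex hu hd).2
    have hθd : -1 ≤ θ * (d i - u ⬝ᵥ d) := by nlinarith [hθ.1, hθ.2, (hd i).1]
    simp only [Pi.smul_apply, Pi.add_apply, smul_eq_mul, dotProduct_smul, dotProduct_add, ← mul_sub]
    exact mul_le_mul_of_nonneg_left (by linarith) (by positivity)
  have hαm : α * (L i - u ⬝ᵥ L - 1) ≤ α * τ / c * m :=
    calc α * (L i - u ⬝ᵥ L - 1) = α * τ / c * (c / τ * (L i - u ⬝ᵥ L - 1)) := by field_simp
      _ ≤ α * τ / c * m := by gcongr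
  have hsq : α ^ 2 * τ ^ 2 / c ^ 2 = (α * τ / c) ^ 2 := by field_simp
  rw [← Real.exp_add, Real.exp_le_exp, hsq]
  linarith [sq_nonneg (m / 2 - α * τ / c)]

end Entropy

section ConditionalMoment

variable {Ω : Type*} [MeasurableSpace Ω] {μ : Measure Ω}

theorem exp_neg_mul_le {a x : ℝ} (ha₀ : 0 ≤ a) (ha₁ : a ≤ 1) (hx : |x| ≤ 1) :
    Real.exp (-a * x) ≤ 1 + a ^ 2 - a * x := by
  have habs : |-a * x| ≤ 1 := by
    rw [abs_mul, abs_neg, abs_of_nonneg ha₀]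
    exact mul_le_one₀ ha₁ (abs_nonneg _) hx
  have hexp := (abs_le.1 (Real.abs_exp_sub_one_sub_id_le habs)).2
  have hsq : x ^ 2 ≤ 1 := (sq_le_one_iff_abs_le_one _).2 hx
  nlinarith [mul_le_mul_of_nonneg_left hsq (sq_nonneg a)]

theorem mul_integral_le_integral_mul_of_condDistrib [IsFiniteMeasure μ] {H E : Type*}
    [MeasurableSpace H] [MeasurableSpace E] [StandardBorelSpace E] [Nonempty E] {X : Ω → H}
    {Y : Ω → E} (hX : Measurable X) (hY : Measurable Y) {ζ : H → ℝ} (hζ : Measurable ζ)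
    (hζ₀ : ∀ x, 0 ≤ ζ x) {φ : E → ℝ} (hφ : Measurable φ) {δ : ℝ}
    (hζX : Integrable (fun ω ↦ ζ (X ω)) μ) (hζφ : Integrable (fun ω ↦ ζ (X ω) * φ (Y ω)) μ)
    (hδ : ∀ᵐ ω ∂μ, δ ≤ ∫ y, φ y ∂(condDistrib Y X μ (X ω))) :
    δ * ∫ ω, ζ (X ω) ∂μ ≤ ∫ ω, ζ (X ω) * φ (Y ω) ∂μ := by
  have hmeas : Measurable fun p : H × E ↦ ζ p.1 * φ p.2 :=
    (hζ.comp measurable_fst).mul (hφ.comp measurable_snd)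
  have hcond := condExp_prod_ae_eq_integral_condDistrib hX hY.aemeasurable
    hmeas.stronglyMeasurable hζφ
  calc δ * ∫ ω, ζ (X ω) ∂μ = ∫ ω, δ * ζ (X ω) ∂μ := (integral_const_mul _ _).symm
    _ ≤ ∫ ω, ∫ y, ζ (X ω) * φ y ∂(condDistrib Y X μ (X ω)) ∂μ := by
        refine integral_mono_ae (hζX.const_mul δ) ((integrable_congr hcond).1 integrable_condExp) ?_
        filter_upwards [hδ] with ω hω
        rw [integral_const_mul, mul_comm]
        exact mul_le_mul_of_nonneg_left hω (hζ₀ _)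
    _ = ∫ ω, ζ (X ω) * φ (Y ω) ∂μ := by
        rw [← integral_congr_ae hcond, integral_condExp hX.comap_le]

variable {E : Type*} [MeasurableSpace E] {X : ℕ → Ω → E} {φ : E → ℝ} {a : ℝ}

theorem integrable_exp_neg_mul_sum [IsFiniteMeasure μ] (hX : ∀ t, Measurable (X t))
    (hφ : Measurable φ) (hφX : ∀ t ω, |φ (X t ω)| ≤ 1) (ha : 0 ≤ a) (n : ℕ) :
    Integrable (fun ω ↦ Real.exp (-a * ∑ s ∈ Finset.range n, φ (X s ω))) μ := by
  have hmeas : Measurable fun ω ↦ Real.exp (-a * ∑ s ∈ Finset.range n, φ (X s ω)) := by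
    fun_prop
  refine .of_bound (C := Real.exp (a * n)) hmeas.aestronglyMeasurable (.of_forall fun ω ↦ ?_)
  have hsum : -(n : ℝ) ≤ ∑ s ∈ Finset.range n, φ (X s ω) := by
    simpa using Finset.card_nsmul_le_sum (Finset.range n) (fun s ↦ φ (X s ω)) (-1)
      fun s _ ↦ (abs_le.1 (hφX s ω)).1
  rw [Real.norm_eq_abs, Real.abs_exp, Real.exp_le_exp]
  nlinarith

theorem integral_exp_neg_mul_sum_le [IsProbabilityMeasure μ] [StandardBorelSpace E] [Nonempty E]
    (hX : ∀ t, Measurable (X t)) (hφ : Measurable φ) (hφX : ∀ t ω, |φ (X t ω)| ≤ 1) {δ : ℝ}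
    (hδ : ∀ n, ∀ᵐ ω ∂μ, δ ≤ ∫ x, φ x ∂(condDistrib (X n) (fun ω' (s : Fin n) ↦ X s ω') μ
      fun s : Fin n ↦ X s ω))
    (ha₀ : 0 ≤ a) (ha₁ : a ≤ 1) (n : ℕ) :
    ∫ ω, Real.exp (-a * ∑ s ∈ Finset.range n, φ (X s ω)) ∂μ ≤ Real.exp (n * (a ^ 2 - a * δ)) := by
  induction n with
  | zero => simp
  | succ n ih =>
    set Z : Ω → ℝ := fun ω ↦ Real.exp (-a * ∑ s ∈ Finset.range n, φ (X s ω)) with hZ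
    have hZ_int : Integrable Z μ := integrable_exp_neg_mul_sum hX hφ hφX ha₀ n
    have hZφ_int : Integrable (fun ω ↦ Z ω * φ (X n ω)) μ :=
      hZ_int.mul_bdd (c := 1) (hφ.comp (hX n)).aestronglyMeasurable (.of_forall (hφX n))
    have hcond : δ * ∫ ω, Z ω ∂μ ≤ ∫ ω, Z ω * φ (X n ω) ∂μ := by
      simp only [hZ, Finset.sum_range] at hZ_int hZφ_int ⊢
      exact mul_integral_le_integral_mul_of_condDistrib
        (X := fun ω (s : Fin n) ↦ X s ω) (ζ := fun x ↦ Real.exp (-a * ∑ s, φ (x s)))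
        (by fun_prop) (hX n) (by fun_prop) (fun _ ↦ (Real.exp_pos _).le) hφ hZ_int hZφ_int (hδ n)
    calc ∫ ω, Real.exp (-a * ∑ s ∈ Finset.range (n + 1), φ (X s ω)) ∂μ
        ≤ ∫ ω, ((1 + a ^ 2) * Z ω - a * (Z ω * φ (X n ω))) ∂μ := by
          refine integral_mono (integrable_exp_neg_mul_sum hX hφ hφX ha₀ (n + 1))
            ((hZ_int.const_mul _).sub (hZφ_int.const_mul _)) fun ω ↦ ?_
          simp only [Finset.sum_range_succ, mul_add, Real.exp_add]
          linarith [mul_le_mul_of_nonneg_left (exp_neg_mul_le ha₀ ha₁ (hφX n ω))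
            (Real.exp_pos (-a * ∑ s ∈ Finset.range n, φ (X s ω))).le]
      _ = (1 + a ^ 2) * ∫ ω, Z ω ∂μ - a * ∫ ω, Z ω * φ (X n ω) ∂μ := by
          rw [integral_sub (hZ_int.const_mul _) (hZφ_int.const_mul _), integral_const_mul,
            integral_const_mul]
      _ ≤ (a ^ 2 - a * δ + 1) * ∫ ω, Z ω ∂μ := by
          linarith [mul_le_mul_of_nonneg_left hcond ha₀]
      _ ≤ Real.exp (a ^ 2 - a * δ) * Real.exp (n * (a ^ 2 - a * δ)) :=
          mul_le_mul (Real.add_one_le_exp _) ih (integral_nonneg fun ω ↦ (Real.exp_pos _).le)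
            (Real.exp_pos _).le
      _ = Real.exp ((n + 1 : ℕ) * (a ^ 2 - a * δ)) := by
          rw [← Real.exp_add]; push_cast; ring_nf

end ConditionalMoment

section Gap

theorem integrable_apply_of_mem_Icc {ι : Type*} {lam : Measure (ι → ℝ)} [IsFiniteMeasure lam]
    {a b : ℝ} (hlam : ∀ᵐ v ∂lam, ∀ i, v i ∈ Set.Icc a b) (j : ι) :
    Integrable (fun v ↦ v j) lam :=
  .of_mem_Icc a b (measurable_pi_apply j).aemeasurable (hlam.mono fun _ hv ↦ hv j)

theorem abs_integral_sub_le_one {ι : Type*} {lam : Measure (ι → ℝ)} [IsProbabilityMeasure lam]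
    (hlam : ∀ᵐ v ∂lam, ∀ i, v i ∈ Set.Icc (0 : ℝ) 1) (i j : ι) :
    |∫ v, (v i - v j) ∂lam| ≤ 1 := by
  have hbound : ∀ᵐ v ∂lam, ‖v i - v j‖ ≤ 1 := hlam.mono fun v hv ↦
    abs_le.2 ⟨by linarith [(hv i).1, (hv j).2], by linarith [(hv i).2, (hv j).1]⟩
  simpa using norm_integral_le_of_norm_le_const hbound

theorem convex_image_integral {ι E : Type*} [MeasurableSpace E] {D : Set (Measure E)}
    (hconv : ∀ lam₁ ∈ D, ∀ lam₂ ∈ D, ∀ a : ENNReal, a ≤ 1 → a • lam₁ + (1 - a) • lam₂ ∈ D)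
    {f : ι → E → ℝ} (hf : ∀ lam ∈ D, ∀ j, Integrable (f j) lam) :
    Convex ℝ ((fun lam j ↦ ∫ v, f j v ∂lam) '' D) := by
  rintro _ ⟨lam₁, h₁, rfl⟩ _ ⟨lam₂, h₂, rfl⟩ a b ha hb hab
  have hb_eq : 1 - ENNReal.ofReal a = ENNReal.ofReal b := by
    rw [← ENNReal.ofReal_one, ← ENNReal.ofReal_sub _ ha, ← hab, add_sub_cancel_left]
  refine ⟨_, hconv lam₁ h₁ lam₂ h₂ (ENNReal.ofReal a) ?_, ?_⟩
  · exact ENNReal.ofReal_le_one.2 (by linarith)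
  · ext j
    simp only [hb_eq]
    rw [integral_add_measure ((hf lam₁ h₁ j).smul_measure ENNReal.ofReal_ne_top)
        ((hf lam₂ h₂ j).smul_measure ENNReal.ofReal_ne_top),
      integral_smul_measure, integral_smul_measure]
    simp [ha, hb]

variable {N : ℕ} {D : Set (Measure (Fin N → ℝ))}

theorem sSup_range_integral_sub_nonneg (lam : Measure (Fin N → ℝ)) (i : Fin N) :
    0 ≤ sSup (Set.range fun j ↦ ∫ v, (v i - v j) ∂lam) :=
  le_csSup_of_le (Set.finite_range _).bddAbove ⟨i, rfl⟩ (by simp)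

theorem gap_nonneg (D : Set (Measure (Fin N → ℝ))) (i : Fin N) : 0 ≤ gap D i :=
  Real.sInf_nonneg (Set.forall_mem_image.2 fun _ _ ↦ sSup_range_integral_sub_nonneg _ i)

theorem gap_le_sSup {lam : Measure (Fin N → ℝ)} (hlam : lam ∈ D) (i : Fin N) :
    gap D i ≤ sSup (Set.range fun j ↦ ∫ v, (v i - v j) ∂lam) :=
  csInf_le ⟨0, Set.forall_mem_image.2 fun _ _ ↦ sSup_range_integral_sub_nonneg _ i⟩
    ⟨lam, hlam, rfl⟩

theorem gap0_le_gap {i : Fin N} (hi : gap D i ≠ 0) : gap0 D ≤ gap D i :=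
  csInf_le (Set.toFinite _).bddBelow ⟨i, (gap_nonneg D i).lt_of_ne' hi, rfl⟩

theorem gap0_pos (h : ∃ i, 0 < gap D i) : 0 < gap0 D := by
  obtain ⟨i, hi⟩ := h
  obtain ⟨j, hj, hgap⟩ := Set.Nonempty.csInf_mem (s := gap D '' {i | 0 < gap D i})
    ⟨_, i, hi, rfl⟩ (Set.toFinite _)
  rw [gap0, ← hgap]
  exact hj

theorem nonempty_of_gap_pos {i : Fin N} (hi : 0 < gap D i) : D.Nonempty := by
  by_contra hD
  simp [gap, Set.not_nonempty_iff_eq_empty.1 hD] at hi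

theorem two_le_of_gap_pos {i : Fin N} (hi : 0 < gap D i) : 2 ≤ N := by
  by_contra hN
  have : Subsingleton (Fin N) := Fin.subsingleton_iff_le_one.2 (by lia)
  have hzero : ∀ j, i = j := fun j ↦ Subsingleton.elim i j
  have hle : gap D i ≤ 0 := by
    obtain ⟨lam, hlam⟩ := nonempty_of_gap_pos hi
    refine (gap_le_sSup hlam i).trans (Real.sSup_nonpos ?_)
    rintro _ ⟨j, rfl⟩
    simp [← hzero j]
  exact hle.not_gt hi

theorem exists_gap_le_integral_sub {lam : Measure (Fin N → ℝ)} (hlam : lam ∈ D) (i : Fin N) :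
    ∃ j, gap D i ≤ ∫ v, (v i - v j) ∂lam := by
  have : Nonempty (Fin N) := ⟨i⟩
  obtain ⟨j, hj⟩ := (Set.range_nonempty fun j ↦ ∫ v, (v i - v j) ∂lam).csSup_mem
    (Set.finite_range _)
  exact ⟨j, (gap_le_sSup hlam i).trans_eq hj.symm⟩

theorem exists_mem_stdSimplex_gap_le_integral (hD : D.Nonempty)
    (hDprob : ∀ lam ∈ D, IsProbabilityMeasure lam ∧ ∀ᵐ v ∂lam, ∀ i, v i ∈ Set.Icc (0 : ℝ) 1)
    (hDconv : ∀ lam₁ ∈ D, ∀ lam₂ ∈ D, ∀ a : ENNReal, a ≤ 1 → a • lam₁ + (1 - a) • lam₂ ∈ D)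
    (i : Fin N) :
    ∃ u ∈ stdSimplex ℝ (Fin N), ∀ lam ∈ D, gap D i ≤ ∫ v, (v i - u ⬝ᵥ v) ∂lam := by
  have hint : ∀ lam ∈ D, ∀ j, Integrable (fun v ↦ v j) lam := fun lam hlam ↦
    have := (hDprob lam hlam).1
    integrable_apply_of_mem_Icc (hDprob lam hlam).2
  have hbdd : Bornology.IsBounded ((fun lam j ↦ ∫ v, (v i - v j) ∂lam) '' D) := by
    refine isBounded_iff_forall_norm_le.2 ⟨1, ?_⟩
    rintro _ ⟨lam, hlam, rfl⟩
    obtain ⟨_, hIcc⟩ := hDprob lam hlam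
    exact (pi_norm_le_iff_of_nonneg zero_le_one).2 (abs_integral_sub_le_one hIcc i)
  obtain ⟨u, hu, hu_le⟩ := exists_mem_stdSimplex_forall_le_dotProduct
    (hD.image _) (convex_image_integral hDconv fun lam hlam j ↦
      (hint lam hlam i).sub (hint lam hlam j)) hbdd
    (Set.forall_mem_image.2 fun lam hlam ↦ exists_gap_le_integral_sub hlam i)
  refine ⟨u, hu, fun lam hlam ↦ (hu_le _ ⟨lam, hlam, rfl⟩).trans_eq ?_⟩
  calc (fun j ↦ ∫ v, (v i - v j) ∂lam) ⬝ᵥ u = ∑ j, ∫ v, u j * (v i - v j) ∂lam := by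
        simp only [dotProduct, integral_const_mul, mul_comm]
    _ = ∫ v, ∑ j, u j * (v i - v j) ∂lam := (integral_finsetSum _ fun j _ ↦
        ((hint lam hlam i).sub (hint lam hlam j)).const_mul _).symm
    _ = ∫ v, (v i - u ⬝ᵥ v) ∂lam := by
        simp only [dotProduct, mul_sub, Finset.sum_sub_distrib, ← Finset.sum_mul, hu.2, one_mul]

theorem gap_le_one (hD : D.Nonempty)
    (hDprob : ∀ lam ∈ D, IsProbabilityMeasure lam ∧ ∀ᵐ v ∂lam, ∀ i, v i ∈ Set.Icc (0 : ℝ) 1)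
    (i : Fin N) : gap D i ≤ 1 := by
  obtain ⟨lam, hlam⟩ := hD
  obtain ⟨j, hj⟩ := exists_gap_le_integral_sub hlam i
  obtain ⟨_, hIcc⟩ := hDprob lam hlam
  exact hj.trans (abs_le.1 (abs_integral_sub_le_one hIcc i j)).2

end Gap

section SqrtIncrements

theorem sqrt_add_one_sub_sqrt_nonneg (x : ℝ) : 0 ≤ √(x + 1) - √x :=
  sub_nonneg.2 (Real.sqrt_le_sqrt (by linarith))

theorem sqrt_add_one_sub_sqrt_le {x : ℝ} (hx : 0 ≤ x) : √(x + 1) - √x ≤ 1 / √(x + 1) := by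
  rw [le_div_iff₀ (Real.sqrt_pos.2 (by linarith)), sub_mul, Real.mul_self_sqrt (by linarith)]
  linarith [Real.mul_self_sqrt hx, mul_le_mul_of_nonneg_left
    (Real.sqrt_le_sqrt (by linarith : x ≤ x + 1)) (Real.sqrt_nonneg x)]

theorem sqrt_add_one_sub_sqrt_le_one_div {a x : ℝ} (ha : 0 < a) (hx : 0 ≤ x)
    (hax : a ^ 2 ≤ x + 1) : √(x + 1) - √x ≤ 1 / a :=
  (sqrt_add_one_sub_sqrt_le hx).trans (one_div_le_one_div_of_le ha (Real.le_sqrt_of_sq_le hax))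

theorem sum_sqrt_add_one_sub_sqrt (T : ℕ) : ∑ k ∈ Finset.range T, (√((k : ℝ) + 1) - √k) = √T := by
  simpa using Finset.sum_range_sub (fun k : ℕ ↦ √(k : ℝ)) T

theorem sum_sqrt_add_one_sub_sqrt_le {x : ℝ} (hx : 0 ≤ x) (T : ℕ) :
    ∑ k ∈ Finset.range T with ((k : ℕ) : ℝ) + 1 ≤ x, (√((k : ℝ) + 1) - √k) ≤ √x := by
  calc ∑ k ∈ Finset.range T with ((k : ℕ) : ℝ) + 1 ≤ x, (√((k : ℝ) + 1) - √k)
      ≤ ∑ k ∈ Finset.range ⌊x⌋₊, (√((k : ℝ) + 1) - √k) := by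
        refine Finset.sum_le_sum_of_subset_of_nonneg (fun k hk ↦ ?_)
          fun k _ _ ↦ sqrt_add_one_sub_sqrt_nonneg k
        exact Finset.mem_range.2 (Nat.le_floor (by exact_mod_cast (Finset.mem_filter.1 hk).2))
    _ = √(⌊x⌋₊ : ℝ) := sum_sqrt_add_one_sub_sqrt _
    _ ≤ √x := Real.sqrt_le_sqrt (Nat.floor_le hx)

theorem sum_exp_neg_mul_le {x : ℝ} (hx : 0 < x) (T : ℕ) :
    ∑ k ∈ Finset.range T, Real.exp (-x * (k + 1)) ≤ 1 / x := by
  suffices h : ∑ k ∈ Finset.range T, Real.exp (-x * (k + 1)) ≤ (1 - Real.exp (-x * T)) / x from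
    h.trans (by gcongr; linarith [Real.exp_pos (-x * T)])
  induction T with
  | zero => simp
  | succ n ih =>
    have hstep : Real.exp (-x * (n + 1)) * Real.exp x = Real.exp (-x * n) := by
      rw [← Real.exp_add]; ring_nf
    rw [le_div_iff₀ hx] at ih
    rw [Finset.sum_range_succ, le_div_iff₀ hx, Nat.cast_succ]
    linarith [mul_le_mul_of_nonneg_left (Real.add_one_le_exp x) (Real.exp_pos (-x * (n + 1))).le]

theorem sum_sqrt_add_one_sub_sqrt_mul_le {a b e x : ℝ} {r p : ℕ → ℝ} (hb : 0 ≤ b) (he : 0 ≤ e)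
    (hx : 0 ≤ x) (hp : ∀ k, 0 ≤ p k)
    (hincr : ∀ k : ℕ, x < (k : ℝ) + 1 → √((k : ℝ) + 1) - √k ≤ e)
    (hearly : ∀ k : ℕ, (k : ℝ) + 1 ≤ x → r k ≤ a + b)
    (hlate : ∀ k : ℕ, x < (k : ℝ) + 1 → r k ≤ a + p k) (T : ℕ) :
    ∑ k ∈ Finset.range T, (√((k : ℝ) + 1) - √k) * r k ≤
      a * √T + b * √x + e * ∑ k ∈ Finset.range T, p k := by
  have hround (k : ℕ) : (√((k : ℝ) + 1) - √k) * r k ≤ a * (√((k : ℝ) + 1) - √k)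
      + b * (if (k : ℝ) + 1 ≤ x then √((k : ℝ) + 1) - √k else 0) + e * p k := by
    have hnonneg := sqrt_add_one_sub_sqrt_nonneg (k : ℝ)
    split_ifs with hk
    · linarith [mul_le_mul_of_nonneg_left (hearly k hk) hnonneg, mul_nonneg he (hp k)]
    · linarith [mul_le_mul_of_nonneg_left (hlate k (not_le.1 hk)) hnonneg,
        mul_le_mul_of_nonneg_right (hincr k (not_le.1 hk)) (hp k)]
  calc ∑ k ∈ Finset.range T, (√((k : ℝ) + 1) - √k) * r k
      ≤ a * √T + b * ∑ k ∈ Finset.range T with ((k : ℕ) : ℝ) + 1 ≤ x, (√((k : ℝ) + 1) - √k)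
        + e * ∑ k ∈ Finset.range T, p k := by
        refine (Finset.sum_le_sum fun k _ ↦ hround k).trans_eq ?_
        simp only [Finset.sum_add_distrib, ← Finset.mul_sum, sum_sqrt_add_one_sub_sqrt,
          ← Finset.sum_filter]
    _ ≤ a * √T + b * √x + e * ∑ k ∈ Finset.range T, p k := by
        gcongr
        exact sum_sqrt_add_one_sub_sqrt_le hx T

/-- The number of rounds after which, for `B = log N` and smallest positive gap `d`, the experts of
positive gap contribute only an exponential tail to the regret. The constant `50` is an arbitrary
choice that balances the early rounds against this tail. -/
noncomputable def burnIn (B d : ℝ) : ℝ := 50 * B / d ^ 2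

/- Rounds up to the burn-in time `burnIn B d` cost `√(2B) · √(50 B / d²) = 10 B / d`. Afterwards
`√(k + 1) - √k ≤ d / 5` and the exponential tail sums to at most `10 / d²`, which costs
`6 / d ≤ 15 B / d`. -/
theorem sum_sqrt_add_one_sub_sqrt_mul_le_of_burnIn {A B d : ℝ} (hB : Real.log 2 ≤ B) (hd : 0 < d)
    {r : ℕ → ℝ}
    (hearly : ∀ k : ℕ, (k : ℝ) + 1 ≤ burnIn B d → r k ≤ √(2 * A) + √(2 * B))
    (hlate : ∀ k : ℕ, burnIn B d < (k : ℝ) + 1 →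
      r k ≤ √(2 * A) + 3 * Real.exp (-(d ^ 2 / 10) * (k + 1))) (T : ℕ) :
    ∑ k ∈ Finset.range T, (√((k : ℝ) + 1) - √k) * r k ≤ √(2 * A) * √T + 25 * B / d := by
  have hlog := Real.log_two_gt_d9
  have hB₀ : 0 < B := by linarith
  have hburn₀ : 0 ≤ burnIn B d := by unfold burnIn; positivity
  have hburn : √(2 * B) * √(burnIn B d) = 10 * B / d := by
    rw [burnIn, ← Real.sqrt_mul (by positivity), Real.sqrt_eq_iff_mul_self_eq (by positivity)
      (by positivity)]
    field_simp; ring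
  have hincr (k : ℕ) (hk : burnIn B d < (k : ℝ) + 1) : √((k : ℝ) + 1) - √k ≤ d / 5 := by
    rw [← one_div_div 5 d]
    refine sqrt_add_one_sub_sqrt_le_one_div (by positivity) k.cast_nonneg (le_trans ?_ hk.le)
    rw [div_pow, burnIn]
    gcongr
    linarith
  calc ∑ k ∈ Finset.range T, (√((k : ℝ) + 1) - √k) * r k
      ≤ √(2 * A) * √T + √(2 * B) * √(burnIn B d)
        + d / 5 * ∑ k ∈ Finset.range T, 3 * Real.exp (-(d ^ 2 / 10) * (k + 1)) :=
        sum_sqrt_add_one_sub_sqrt_mul_le (by positivity) (by positivity) hburn₀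
          (fun _ ↦ by positivity) hincr hearly hlate T
    _ ≤ √(2 * A) * √T + 10 * B / d + d / 5 * (3 * (1 / (d ^ 2 / 10))) := by
        rw [hburn, ← Finset.mul_sum]
        gcongr
        exact sum_exp_neg_mul_le (by positivity) T
    _ = √(2 * A) * √T + (10 * B + 6) / d := by field_simp; ring
    _ ≤ √(2 * A) * √T + 25 * B / d := by gcongr; linarith

end SqrtIncrements

section Expectation

theorem sum_Icc_apply_sub_dotProduct {ι : Type*} [Fintype ι] (x : ℕ → ι → ℝ) (u : ι → ℝ) (i : ι)
    (k : ℕ) : (∑ s ∈ Finset.Icc 1 k, x s) i - u ⬝ᵥ ∑ s ∈ Finset.Icc 1 k, x s =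
      ∑ s ∈ Finset.range k, (x (s + 1) i - u ⬝ᵥ x (s + 1)) := by
  rw [Finset.sum_apply, dotProduct_sum, ← Finset.sum_sub_distrib, Finset.range_eq_Ico,
    Finset.sum_Ico_add' (fun s ↦ x s i - u ⬝ᵥ x s), zero_add, Finset.Ico_add_one_right_eq_Icc]

theorem exp_mul_exp_le_of_burnIn {B d x : ℝ} (hB : Real.log 2 ≤ B) (hd₀ : 0 < d) (hd₁ : d ≤ 1)
    (hx : burnIn B d < x) :
    Real.exp (2 * d / 5 + (2 * d / 5) ^ 2 * x / 4) *
      (Real.exp B * Real.exp ((x - 1) * ((2 * d / 5) ^ 2 - 2 * d / 5 * d))) ≤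
      Real.exp (-(d ^ 2 / 10) * x) := by
  rw [burnIn, div_lt_iff₀ (by positivity)] at hx
  rw [← Real.exp_add, ← Real.exp_add, Real.exp_le_exp]
  nlinarith [Real.log_two_gt_d9]

theorem rootEntropy_carlMargin_le {ι : Type*} [Fintype ι] [DecidableEq ι] [Nonempty ι]
    {c τ α θ : ℝ} (hc : 0 < c) (hτ : 0 < τ) (hα : 0 ≤ α) (hθ : θ ∈ Set.Icc 0 1) {u : ι → ι → ℝ}
    (hu : ∀ i, u i ∈ stdSimplex ℝ ι) {d : ι → ℝ} (hd : ∀ i, d i ∈ Set.Icc 0 1) (L : ι → ℝ)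
    (I : Finset ι) :
    rootEntropy (carlMargin ((c / τ) • (L + θ • d))) ≤ √(2 * Real.log I.card)
      + 3 * (Real.exp (α + α ^ 2 * τ ^ 2 / c ^ 2)
        * ∑ i ∈ Iᶜ, Real.exp (-α * (L i - u i ⬝ᵥ L))) := by
  refine (rootEntropy_le_sqrt_log_add (sum_gaussKernel_carlMargin _) I).trans ?_
  rw [Finset.mul_sum _ _ (Real.exp _)]
  gcongr with i
  exact exp_neg_carlMargin_sq_le hc hτ hα hθ (hu i) hd L i

variable {Ω : Type*} [MeasurableSpace Ω] {μ : Measure Ω}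

theorem integrable_iSup {ι : Type*} [Finite ι] {f : ι → Ω → ℝ} (hf : ∀ i, Integrable (f i) μ) :
    Integrable (fun ω ↦ ⨆ i, f i ω) μ := by
  have := Fintype.ofFinite ι
  refine (integrable_finsetSum Finset.univ fun i _ ↦ (hf i).abs).mono'
    (AEMeasurable.iSup fun i ↦ (hf i).aemeasurable).aestronglyMeasurable (.of_forall fun ω ↦ ?_)
  have hle (i : ι) : |f i ω| ≤ ∑ j, |f j ω| :=
    Finset.single_le_sum (f := fun j ↦ |f j ω|) (fun _ _ ↦ abs_nonneg _) (Finset.mem_univ i)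
  cases isEmpty_or_nonempty ι with
  | inl _ => simp
  | inr _ =>
    obtain ⟨i⟩ := ‹Nonempty ι›
    exact abs_le.2 ⟨le_ciSup_of_le (Set.finite_range _).bddAbove i (abs_le.1 (hle i)).1,
      ciSup_le fun j ↦ (abs_le.1 (hle j)).2⟩

variable {N : ℕ} {ℓ w : ℕ → Ω → Fin N → ℝ}

theorem IsCarl.integral_iSup_regret_le [IsProbabilityMeasure μ] [Nonempty (Fin N)]
    (hℓ : ∀ t, Measurable (ℓ t)) (hℓ_mem : ∀ t ω i, ℓ t ω i ∈ Set.Icc (0 : ℝ) 1)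
    (hw : ∀ t, Measurable (w t)) (hcarl : ∀ ω, IsCarl N 2 (ℓ · ω) (w · ω)) {R : ℕ → Ω → ℝ}
    (hR_int : ∀ k, Integrable (R k) μ)
    (hR : ∀ (ω) (k : ℕ), ∀ θ ∈ Set.Icc (0 : ℝ) 1, rootEntropy (carlMargin
      ((2 / √((k : ℝ) + 1)) • (∑ s ∈ Finset.Icc 1 k, ℓ s ω + θ • ℓ (k + 1) ω))) ≤ R k ω) (T : ℕ) :
    ∫ ω, ⨆ i, ∑ t ∈ Finset.Icc 1 T, (ℓ t ω ⬝ᵥ w t ω - ℓ t ω i) ∂μ ≤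
      ∑ k ∈ Finset.range T, (√((k : ℝ) + 1) - √k) * ∫ ω, R k ω ∂μ := by
  have hround_int (i : Fin N) {t : ℕ} (ht : t ∈ Finset.Icc 1 T) :
      Integrable (fun ω ↦ ℓ t ω ⬝ᵥ w t ω - ℓ t ω i) μ := by
    refine .of_bound (C := 1) (by unfold dotProduct; fun_prop) (.of_forall fun ω ↦ ?_)
    obtain ⟨k, rfl⟩ := Nat.exists_eq_add_of_le' (Finset.mem_Icc.1 ht).1
    rw [dotProduct_comm, Real.norm_eq_abs, abs_sub_comm]
    exact abs_sub_dotProduct_le_one (hcarl ω k).1 (hℓ_mem _ ω) i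
  have hregret (ω) : ⨆ i, ∑ t ∈ Finset.Icc 1 T, (ℓ t ω ⬝ᵥ w t ω - ℓ t ω i) ≤
      ∑ k ∈ Finset.range T, (√((k : ℝ) + 1) - √k) * R k ω := by
    refine ciSup_le fun i ↦ ((hcarl ω).sum_dotProduct_sub_le two_pos (hℓ_mem · ω)
      (hR ω) T i).trans_eq ?_
    norm_num
  refine (integral_mono (integrable_iSup fun i ↦ integrable_finsetSum _ fun t ↦ hround_int i)
    (integrable_finsetSum _ fun k _ ↦ (hR_int k).const_mul _) hregret).trans_eq ?_
  simp only [integral_finsetSum _ fun k _ ↦ (hR_int k).const_mul _, integral_const_mul]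

namespace IsSemiAdv

variable [IsProbabilityMeasure μ] {D : Set (Measure (Fin N → ℝ))} {α : ℝ} {u : Fin N → ℝ}

theorem integrable_exp_neg_mul_sub (hsa : IsSemiAdv μ D ℓ) (hα : 0 ≤ α)
    (hu : u ∈ stdSimplex ℝ (Fin N)) (i : Fin N) (k : ℕ) :
    Integrable (fun ω ↦ Real.exp (-α * ((∑ s ∈ Finset.Icc 1 k, ℓ s ω) i
      - u ⬝ᵥ ∑ s ∈ Finset.Icc 1 k, ℓ s ω))) μ := by
  simp only [sum_Icc_apply_sub_dotProduct (ℓ · _)]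
  exact integrable_exp_neg_mul_sum (X := fun s ↦ ℓ (s + 1)) (φ := fun v ↦ v i - u ⬝ᵥ v)
    (fun s ↦ hsa.1 _) (by unfold dotProduct; fun_prop)
    (fun s ω ↦ abs_sub_dotProduct_le_one hu (hsa.2.1 _ ω) i) hα k

theorem integral_exp_neg_mul_sub_le (hsa : IsSemiAdv μ D ℓ) (hα₀ : 0 ≤ α) (hα₁ : α ≤ 1)
    (hu : u ∈ stdSimplex ℝ (Fin N)) {i : Fin N} {δ : ℝ}
    (hδ : ∀ lam ∈ D, δ ≤ ∫ v, (v i - u ⬝ᵥ v) ∂lam) (k : ℕ) :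
    ∫ ω, Real.exp (-α * ((∑ s ∈ Finset.Icc 1 k, ℓ s ω) i
      - u ⬝ᵥ ∑ s ∈ Finset.Icc 1 k, ℓ s ω)) ∂μ ≤ Real.exp (k * (α ^ 2 - α * δ)) := by
  simp only [sum_Icc_apply_sub_dotProduct (ℓ · _)]
  exact integral_exp_neg_mul_sum_le (X := fun s ↦ ℓ (s + 1)) (φ := fun v ↦ v i - u ⬝ᵥ v)
    (fun s ↦ hsa.1 _) (by unfold dotProduct; fun_prop)
    (fun s ω ↦ abs_sub_dotProduct_le_one hu (hsa.2.1 _ ω) i)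
    (fun n ↦ (hsa.2.2 n).mono fun ω hω ↦ hδ _ hω) hα₀ hα₁ k

theorem integral_sum_exp_neg_mul_sub_le (hsa : IsSemiAdv μ D ℓ) (hα₀ : 0 ≤ α) (hα₁ : α ≤ 1)
    {u : Fin N → Fin N → ℝ} (hu : ∀ i, u i ∈ stdSimplex ℝ (Fin N)) {J : Finset (Fin N)} {δ : ℝ}
    (hδ : ∀ i ∈ J, ∀ lam ∈ D, δ ≤ ∫ v, (v i - u i ⬝ᵥ v) ∂lam) (k : ℕ) :
    ∫ ω, ∑ i ∈ J, Real.exp (-α * ((∑ s ∈ Finset.Icc 1 k, ℓ s ω) i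
      - u i ⬝ᵥ ∑ s ∈ Finset.Icc 1 k, ℓ s ω)) ∂μ ≤ N * Real.exp (k * (α ^ 2 - α * δ)) := by
  rw [integral_finsetSum _ fun i _ ↦ hsa.integrable_exp_neg_mul_sub hα₀ (hu i) i k]
  refine (Finset.sum_le_card_nsmul J _ _ fun i hi ↦
    hsa.integral_exp_neg_mul_sub_le hα₀ hα₁ (hu i) (hδ i hi) k).trans ?_
  rw [nsmul_eq_mul]
  gcongr
  simpa using J.card_le_univ

theorem exists_integral_le_rootEntropy_le [Nonempty (Fin N)] (hsa : IsSemiAdv μ D ℓ)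
    (hα₀ : 0 ≤ α) (hα₁ : α ≤ 1) {u : Fin N → Fin N → ℝ} (hu : ∀ i, u i ∈ stdSimplex ℝ (Fin N))
    (I : Finset (Fin N)) {δ : ℝ} (hδ : ∀ i ∈ Iᶜ, ∀ lam ∈ D, δ ≤ ∫ v, (v i - u i ⬝ᵥ v) ∂lam)
    (k : ℕ) :
    ∃ r : Ω → ℝ, Integrable r μ ∧
      (∀ ω, ∀ θ ∈ Set.Icc (0 : ℝ) 1, rootEntropy (carlMargin ((2 / √((k : ℝ) + 1)) •
        (∑ s ∈ Finset.Icc 1 k, ℓ s ω + θ • ℓ (k + 1) ω))) ≤ r ω) ∧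
      ∫ ω, r ω ∂μ ≤ √(2 * Real.log I.card) + 3 * (Real.exp (α + α ^ 2 * ((k : ℝ) + 1) / 4) *
        (N * Real.exp (k * (α ^ 2 - α * δ)))) := by
  have hint : Integrable (fun ω ↦ 3 * (Real.exp (α + α ^ 2 * ((k : ℝ) + 1) / 4) * ∑ i ∈ Iᶜ,
      Real.exp (-α * ((∑ s ∈ Finset.Icc 1 k, ℓ s ω) i
        - u i ⬝ᵥ ∑ s ∈ Finset.Icc 1 k, ℓ s ω)))) μ :=
    ((integrable_finsetSum _ fun i _ ↦
      hsa.integrable_exp_neg_mul_sub hα₀ (hu i) i k).const_mul _).const_mul _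
  refine ⟨_, (integrable_const √(2 * Real.log I.card)).add hint, fun ω θ hθ ↦ ?_, ?_⟩
  · have hle := rootEntropy_carlMargin_le two_pos (Real.sqrt_pos.2 k.cast_add_one_pos) hα₀ hθ hu
      (hsa.2.1 (k + 1) ω) (∑ s ∈ Finset.Icc 1 k, ℓ s ω) I
    rwa [Real.sq_sqrt k.cast_add_one_pos.le, show (2 : ℝ) ^ 2 = 4 by norm_num] at hle
  · simp only [Pi.add_apply]
    rw [integral_add (integrable_const _) hint, integral_const_mul, integral_const_mul]
    simp only [integral_const, probReal_univ, one_smul]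
    gcongr
    exact hsa.integral_sum_exp_neg_mul_sub_le hα₀ hα₁ hu hδ k

theorem exists_integral_le_rootEntropy_le_of_burnIn [Nonempty (Fin N)] (hsa : IsSemiAdv μ D ℓ)
    (hN : 2 ≤ N) {u : Fin N → Fin N → ℝ} (hu : ∀ i, u i ∈ stdSimplex ℝ (Fin N))
    (I : Finset (Fin N)) {d : ℝ} (hd₀ : 0 < d) (hd₁ : d ≤ 1)
    (hd : ∀ i ∈ Iᶜ, ∀ lam ∈ D, d ≤ ∫ v, (v i - u i ⬝ᵥ v) ∂lam) (k : ℕ) :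
    ∃ r : Ω → ℝ, Integrable r μ ∧
      (∀ ω, ∀ θ ∈ Set.Icc (0 : ℝ) 1, rootEntropy (carlMargin ((2 / √((k : ℝ) + 1)) •
        (∑ s ∈ Finset.Icc 1 k, ℓ s ω + θ • ℓ (k + 1) ω))) ≤ r ω) ∧
      ((k : ℝ) + 1 ≤ burnIn (Real.log N) d →
        ∫ ω, r ω ∂μ ≤ √(2 * Real.log I.card) + √(2 * Real.log N)) ∧
      (burnIn (Real.log N) d < (k : ℝ) + 1 →
        ∫ ω, r ω ∂μ ≤ √(2 * Real.log I.card) + 3 * Real.exp (-(d ^ 2 / 10) * (k + 1))) := by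
  have hN₀ : (0 : ℝ) < N := by positivity
  rcases le_or_gt ((k : ℝ) + 1) (burnIn (Real.log N) d) with hk | hk
  · refine ⟨fun _ ↦ √(2 * Real.log N), integrable_const _, fun ω θ _ ↦ ?_, fun _ ↦ ?_,
      fun hk' ↦ (hk.not_gt hk').elim⟩
    · simpa using rootEntropy_le_sqrt_log (sum_gaussKernel_carlMargin
        ((2 / √((k : ℝ) + 1)) • (∑ s ∈ Finset.Icc 1 k, ℓ s ω + θ • ℓ (k + 1) ω)))
    · simp
  · obtain ⟨r, hr_int, hr, hr_le⟩ := hsa.exists_integral_le_rootEntropy_le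
      (α := 2 * d / 5) (by positivity) (by linarith) hu I hd k
    refine ⟨r, hr_int, hr, fun hk' ↦ (hk.not_ge hk').elim, fun _ ↦ hr_le.trans ?_⟩
    have htail := exp_mul_exp_le_of_burnIn (Real.log_le_log two_pos (by exact_mod_cast hN))
      hd₀ hd₁ hk
    rw [Real.exp_log hN₀, add_sub_cancel_right] at htail
    gcongr

theorem integral_iSup_regret_le (hsa : IsSemiAdv μ D ℓ) (hN : 2 ≤ N)
    (hw : ∀ t, Measurable (w t)) (hcarl : ∀ ω, IsCarl N 2 (ℓ · ω) (w · ω))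
    {u : Fin N → Fin N → ℝ} (hu : ∀ i, u i ∈ stdSimplex ℝ (Fin N)) (I : Finset (Fin N)) {d : ℝ}
    (hd₀ : 0 < d) (hd₁ : d ≤ 1) (hd : ∀ i ∈ Iᶜ, ∀ lam ∈ D, d ≤ ∫ v, (v i - u i ⬝ᵥ v) ∂lam)
    (T : ℕ) :
    ∫ ω, ⨆ i, ∑ t ∈ Finset.Icc 1 T, (ℓ t ω ⬝ᵥ w t ω - ℓ t ω i) ∂μ ≤
      √(2 * Real.log I.card) * √T + 25 * Real.log N / d := by
  have : Nonempty (Fin N) := ⟨⟨0, by lia⟩⟩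
  choose R hR_int hR hearly hlate using
    hsa.exists_integral_le_rootEntropy_le_of_burnIn hN hu I hd₀ hd₁ hd
  exact (IsCarl.integral_iSup_regret_le hsa.1 hsa.2.1 hw hcarl hR_int (fun ω k ↦ hR k ω) T).trans
    (sum_sqrt_add_one_sub_sqrt_mul_le_of_burnIn (Real.log_le_log two_pos (by exact_mod_cast hN))
      hd₀ hearly hlate T)

end IsSemiAdv

end Expectation

theorem numEff_eq_card {N : ℕ} (D : Set (Measure (Fin N → ℝ))) :
    numEff D = (Finset.univ.filter fun i ↦ gap D i = 0).card := by
  rw [numEff, ← Set.ncard_coe_finset]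
  simp

theorem stmt5_general {Ω : Type*} [MeasurableSpace Ω] (μ : Measure Ω) [IsProbabilityMeasure μ]
    (N : ℕ) (D : Set (Measure (Fin N → ℝ)))
    (hDprob : ∀ lam ∈ D, IsProbabilityMeasure lam ∧ ∀ᵐ v ∂lam, ∀ i, v i ∈ Set.Icc (0 : ℝ) 1)
    (hDconv : ∀ lam₁ ∈ D, ∀ lam₂ ∈ D, ∀ a : ENNReal, a ≤ 1 →
      a • lam₁ + (1 - a) • lam₂ ∈ D)
    (hgap : ∃ i, 0 < gap D i)
    (ℓ : ℕ → Ω → Fin N → ℝ) (hsa : IsSemiAdv μ D ℓ)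
    (w : ℕ → Ω → Fin N → ℝ) (hwmeas : ∀ t, Measurable (w t))
    (hcarl : ∀ ω, IsCarl N 2 (fun t => ℓ t ω) (fun t => w t ω))
    (T : ℕ) :
    ∫ ω, sSup (Set.range fun i : Fin N =>
        ∑ t ∈ Finset.Icc 1 T, ((∑ j, ℓ t ω j * w t ω j) - ℓ t ω i)) ∂μ ≤
      Real.sqrt (2 * (T : ℝ) * Real.log (numEff D)) + 25 * Real.log N / gap0 D := by
  obtain ⟨i₀, hi₀⟩ := hgap
  have hD := nonempty_of_gap_pos hi₀
  choose u hu hgap_le using exists_mem_stdSimplex_gap_le_integral hD hDprob hDconv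
  have hgap0_le (i) (hi : i ∈ (Finset.univ.filter fun i ↦ gap D i = 0)ᶜ) :
      ∀ lam ∈ D, gap0 D ≤ ∫ v, (v i - u i ⬝ᵥ v) ∂lam := fun lam hlam ↦
    (gap0_le_gap (by simpa using hi)).trans (hgap_le i lam hlam)
  refine (hsa.integral_iSup_regret_le (two_le_of_gap_pos hi₀) hwmeas hcarl hu _ (gap0_pos ⟨i₀, hi₀⟩)
    ((gap0_le_gap hi₀.ne').trans (gap_le_one hD hDprob i₀)) hgap0_le T).trans_eq ?_
  rw [← numEff_eq_card, mul_right_comm, Real.sqrt_mul' _ T.cast_nonneg]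

/-- adaptive minimax bound for FTRL-CARL (`c = 2`) in the
semi-adversarial paradigm: for any time-homogeneous convex constraint `D` with at least
one positive gap, for every `T > 8·(log N₀)/Δ₀²`,
`E[max_i (Σ_{t=1}^T ⟨ℓ_t, w_t⟩ − Σ_{t=1}^T ℓ_t(i))] ≤ √(2·T·log N₀) + 25·(log N)/Δ₀`. -/
theorem stmt5 {Ω : Type*} [MeasurableSpace Ω] (μ : Measure Ω) [IsProbabilityMeasure μ]
    (N : ℕ) (hN : 2 ≤ N)
    (D : Set (Measure (Fin N → ℝ))) (hD : D.Nonempty)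
    (hDprob : ∀ lam ∈ D, IsProbabilityMeasure lam ∧ ∀ᵐ v ∂lam, ∀ i, v i ∈ Set.Icc (0 : ℝ) 1)
    (hDconv : ∀ lam₁ ∈ D, ∀ lam₂ ∈ D, ∀ a : ENNReal, a ≤ 1 →
      a • lam₁ + (1 - a) • lam₂ ∈ D)
    (hgap : ∃ i, 0 < gap D i)
    (ℓ : ℕ → Ω → Fin N → ℝ) (hsa : IsSemiAdv μ D ℓ)
    (w : ℕ → Ω → Fin N → ℝ) (hwmeas : ∀ t, Measurable (w t))
    (hwadapt : ∀ t (ω ω' : Ω), (∀ s, 1 ≤ s → s ≤ t → ℓ s ω = ℓ s ω') →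
      w (t + 1) ω = w (t + 1) ω')
    (hcarl : ∀ ω, IsCarl N 2 (fun t => ℓ t ω) (fun t => w t ω))
    (T : ℕ) (hT : 8 * Real.log (numEff D) / gap0 D ^ 2 < (T : ℝ)) :
    ∫ ω, sSup (Set.range fun i : Fin N =>
        ∑ t ∈ Finset.Icc 1 T, ((∑ j, ℓ t ω j * w t ω j) - ℓ t ω i)) ∂μ ≤
      Real.sqrt (2 * (T : ℝ) * Real.log (numEff D)) + 25 * Real.log N / gap0 D := by
  exact stmt5_general μ N D hDprob hDconv hgap ℓ hsa w hwmeas hcarl T
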